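/- There exists a constant C > 0 such that for every finite field F, writing q = |F| and G = PSL₂(F), the number of elements y ∈ G with the property that #{z ∈ G : {y, z} invariably generates G} ≥ (1/2 − C/q) · |G| is at least (1 − C·q^{−1/2}) · |G|. -/

import Mathlib

/-- `{x, y}` invariably generates `G`: for all `g, h`, the conjugates
`g * x * g⁻¹` and `h * y * h⁻¹` generate `G`. -/
def InvGen {G : Type*} [Group G] (x y : G) : Prop :=
  ∀ g h : G, Subgroup.closure {g * x * g⁻¹, h * y * h⁻¹} = ⊤

/-- The projective special linear group `PSL₂(F) = SL₂(F) / Z(SL₂(F))`. -/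
abbrev PSL2 (F : Type*) [Field F] :=
  Matrix.SpecialLinearGroup (Fin 2) F ⧸
    Subgroup.center (Matrix.SpecialLinearGroup (Fin 2) F)

open Matrix

abbrev SLT (F : Type*) [Field F] := Matrix.SpecialLinearGroup (Fin 2) F

section basics
variable {F : Type*} [Field F]

def tr2 (g : SLT F) : F := g 0 0 + g 1 1

lemma det2 (g : SLT F) : g 0 0 * g 1 1 - g 0 1 * g 1 0 = 1 := by
  have := g.det_coe
  rwa [Matrix.det_fin_two] at this

lemma mul00 (g h : SLT F) : (g * h) 0 0 = g 0 0 * h 0 0 + g 0 1 * h 1 0 := by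
  simp [Matrix.mul_apply, Fin.sum_univ_two]
lemma mul01 (g h : SLT F) : (g * h) 0 1 = g 0 0 * h 0 1 + g 0 1 * h 1 1 := by
  simp [Matrix.mul_apply, Fin.sum_univ_two]
lemma mul10 (g h : SLT F) : (g * h) 1 0 = g 1 0 * h 0 0 + g 1 1 * h 1 0 := by
  simp [Matrix.mul_apply, Fin.sum_univ_two]
lemma mul11 (g h : SLT F) : (g * h) 1 1 = g 1 0 * h 0 1 + g 1 1 * h 1 1 := by
  simp [Matrix.mul_apply, Fin.sum_univ_two]
lemma inv00 (g : SLT F) : (g⁻¹) 0 0 = g 1 1 := by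
  simp [Matrix.SpecialLinearGroup.coe_inv, Matrix.adjugate_fin_two]
lemma inv01 (g : SLT F) : (g⁻¹) 0 1 = - g 0 1 := by
  simp [Matrix.SpecialLinearGroup.coe_inv, Matrix.adjugate_fin_two]
lemma inv10 (g : SLT F) : (g⁻¹) 1 0 = - g 1 0 := by
  simp [Matrix.SpecialLinearGroup.coe_inv, Matrix.adjugate_fin_two]
lemma inv11 (g : SLT F) : (g⁻¹) 1 1 = g 0 0 := by
  simp [Matrix.SpecialLinearGroup.coe_inv, Matrix.adjugate_fin_two]

lemma ext2 {g h : SLT F} (h1 : g 0 0 = h 0 0) (h2 : g 0 1 = h 0 1) (h3 : g 1 0 = h 1 0)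
    (h4 : g 1 1 = h 1 1) : g = h := by
  ext i j; fin_cases i <;> fin_cases j <;> assumption

lemma comm2 (g h : SLT F) : Commute g h ↔ (g 0 1 * h 1 0 = h 0 1 * g 1 0 ∧
    (g 0 0 - g 1 1) * h 0 1 = (h 0 0 - h 1 1) * g 0 1 ∧
    (g 0 0 - g 1 1) * h 1 0 = (h 0 0 - h 1 1) * g 1 0) := by
  constructor
  · intro hc
    have hc : g * h = h * g := hc
    have e1 := mul00 g h
    have e2 := mul01 g h
    have e3 := mul10 g h
    rw [hc, mul00] at e1
    rw [hc, mul01] at e2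
    rw [hc, mul10] at e3
    refine ⟨?_, ?_, ?_⟩ <;> grind
  · rintro ⟨h1, h2, h3⟩
    apply ext2
    · rw [mul00, mul00]; grind
    · rw [mul01, mul01]; grind
    · rw [mul10, mul10]; grind
    · rw [mul11, mul11]; grind

lemma center2 (g : SLT F) : g ∈ Subgroup.center (SLT F) ↔
    (g 0 1 = 0 ∧ g 1 0 = 0 ∧ g 0 0 = g 1 1) := by
  constructor
  · intro hg
    rw [Matrix.SpecialLinearGroup.mem_center_iff] at hg
    obtain ⟨r, -, hr⟩ := hg
    rw [← hr]; simp
  · rintro ⟨h1, h2, h3⟩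
    rw [Subgroup.mem_center_iff]
    intro h
    have : Commute g h := by
      rw [comm2, h1, h2, h3]; simp
    exact this.symm

lemma comm_trans2 {x y z : SLT F} (hx : x ∉ Subgroup.center (SLT F)) (hy : Commute x y)
    (hz : Commute x z) : Commute y z := by
  rw [comm2] at *
  rw [center2] at hx
  obtain ⟨a1, a2, a3⟩ := hy
  obtain ⟨b1, b2, b3⟩ := hz
  have hx : x 0 1 ≠ 0 ∨ x 1 0 ≠ 0 ∨ x 0 0 - x 1 1 ≠ 0 := by
    by_contra! h; exact hx ⟨h.1, h.2.1, sub_eq_zero.1 h.2.2⟩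
  generalize x 0 0 - x 1 1 = p at *
  generalize y 0 0 - y 1 1 = q at *
  generalize z 0 0 - z 1 1 = r at *
  rcases hx with h | h | h
  all_goals
    refine ⟨?_, ?_, ?_⟩ <;> apply mul_left_cancel₀ h <;> grind

lemma tr2_mul_comm (g h : SLT F) : tr2 (g * h) = tr2 (h * g) := by
  simp only [tr2, mul00, mul11]; ring

lemma tr2_conj (x g : SLT F) : tr2 (x * g * x⁻¹) = tr2 g := by
  rw [tr2_mul_comm, ← mul_assoc]; simp

lemma tr2_inv (g : SLT F) : tr2 (g⁻¹) = tr2 g := by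
  simp only [tr2, inv00, inv11]; ring

lemma commute_conj (x a b : SLT F) : Commute (x * a * x⁻¹) (x * b * x⁻¹) ↔ Commute a b :=
  Commute.conj_iff x

lemma center_conj (x a : SLT F) : x * a * x⁻¹ ∈ Subgroup.center (SLT F) ↔
    a ∈ Subgroup.center (SLT F) := by
  constructor
  · intro h
    have := Subgroup.Normal.conj_mem inferInstance _ h x⁻¹
    simpa [mul_assoc] using this
  · intro h; exact Subgroup.Normal.conj_mem inferInstance _ h x

/-- semisimple: conj commuting with same trace is g or inverse -/
lemma conj_pm {g k : SLT F} (hg : g ∉ Subgroup.center (SLT F)) (ht : tr2 g ^ 2 ≠ 4)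
    (hc : Commute g k) (hk : tr2 k = tr2 g) (hk' : k ∉ Subgroup.center (SLT F)) :
    k = g ∨ k = g⁻¹ := by
  have d1 := det2 g
  have d2 := det2 k
  rw [comm2] at hc
  rw [center2] at hg hk'
  obtain ⟨c1, c2, c3⟩ := hc
  unfold tr2 at *
  have key : (k 0 1 = g 0 1 ∧ k 1 0 = g 1 0 ∧ k 0 0 = g 0 0 ∧ k 1 1 = g 1 1) ∨
     (k 0 1 = - g 0 1 ∧ k 1 0 = - g 1 0 ∧ k 0 0 = g 1 1 ∧ k 1 1 = g 0 0) := by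
    generalize k 0 0 = a' at *
    generalize k 0 1 = b' at *
    generalize k 1 0 = c' at *
    generalize k 1 1 = d' at *
    generalize g 0 0 = a at *
    generalize g 0 1 = b at *
    generalize g 1 0 = c at *
    generalize g 1 1 = d at *
    have hx : ∃ m : F, b' = m * b ∧ c' = m * c ∧ a' - d' = m * (a - d) := by
      by_cases hb : b = 0
      · by_cases hc : c = 0
        · have : a - d ≠ 0 := by grind
          exact ⟨(a' - d') / (a - d), by field_simp; grind, by field_simp; grind, by field_simp⟩
        · exact ⟨c' / c, by field_simp; grind, by field_simp, by field_simp; grind⟩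
      · exact ⟨b' / b, by field_simp, by field_simp; grind, by field_simp; grind⟩
    obtain ⟨m, rfl, rfl, hm⟩ := hx
    have hm2 : (m - 1) * (m + 1) = 0 := by
      apply mul_left_cancel₀ (sub_ne_zero.2 ht)
      have h1 : (a' + d') ^ 2 - 4 = (a' - d') ^ 2 + 4 * (m * b * (m * c)) := by grind
      have h2 : (a + d) ^ 2 - 4 = (a - d) ^ 2 + 4 * (b * c) := by grind
      rw [hk, hm] at h1
      linear_combination (1 - 1 * m ^ 2) * h2 - (1 - 0) * h1 + (m^2-1) * h2 + h1  - h1 + m ^ 2 * h2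
    have ha : (a' - a) * (a' - d) = 0 := by
      have : a' * d' = a * d := by
        have : m ^ 2 = 1 := by grind
        grind
      grind
    rcases mul_eq_zero.1 hm2 with h | h <;> rcases mul_eq_zero.1 ha with h' | h' <;> grind
  rcases key with h | h
  · left; exact ext2 h.2.2.1 h.1 h.2.1 h.2.2.2
  · right; apply ext2
    · rw [inv00]; exact h.2.2.1
    · rw [inv01]; exact h.1
    · rw [inv10]; exact h.2.1
    · rw [inv11]; exact h.2.2.2

def Spl (t : F) : Prop := ∃ a : F, a ^ 2 - t * a + 1 = 0

lemma spl_of_upper {g : SLT F} (h : g 1 0 = 0) : Spl (tr2 g) :=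
  ⟨g 0 0, by have := det2 g; unfold tr2; rw [h] at this; grind⟩

def mk2 (a b c d : F) (h : a * d - b * c = 1) : SLT F :=
  ⟨!![a, b; c, d], by rw [Matrix.det_fin_two]; simpa using h⟩

lemma upper_of_spl {g : SLT F} (h : Spl (tr2 g)) : ∃ s : SLT F, (s * g * s⁻¹) 1 0 = 0 := by
  obtain ⟨e, he⟩ := h
  have hd := det2 g
  unfold tr2 at he
  by_cases hc : g 1 0 = 0
  · exact ⟨1, by simpa using hc⟩
  · -- s = [0, -1... ] left eigenvector row (c, e - a)
    refine ⟨mk2 0 (-(g 1 0)⁻¹) (g 1 0) (e - g 0 0) (by field_simp; ring), ?_⟩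
    rw [mul10, mul10, mul11, inv00, inv10]
    simp only [mk2]
    simp
    grind

lemma upper_comm {g x : SLT F} (hg : g ∉ Subgroup.center (SLT F)) (h : g 1 0 = 0)
    (hc : Commute g x) : x 1 0 = 0 := by
  rw [comm2, h] at hc
  rw [center2] at hg
  grind

lemma spl_comm {g x : SLT F} (hg : g ∉ Subgroup.center (SLT F)) (h : Spl (tr2 g))
    (hc : Commute g x) : Spl (tr2 x) := by
  obtain ⟨s, hs⟩ := upper_of_spl h
  rw [← tr2_conj s x]
  apply spl_of_upper
  exact upper_comm (by rwa [center_conj]) hs ((commute_conj s g x).2 hc)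

lemma spl_of_four {t : F} (h : t ^ 2 = 4) : Spl t := by
  have : (t - 2) * (t + 2) = 0 := by grind
  rcases mul_eq_zero.1 this with h | h
  · exact ⟨1, by grind⟩
  · exact ⟨-1, by grind⟩

lemma diag_of_spl {g : SLT F} (h : Spl (tr2 g)) (h4 : tr2 g ^ 2 ≠ 4) :
    ∃ s : SLT F, (s * g * s⁻¹) 1 0 = 0 ∧ (s * g * s⁻¹) 0 1 = 0 := by
  obtain ⟨s, hs⟩ := upper_of_spl h
  rw [← tr2_conj s g] at h4
  generalize hg' : s * g * s⁻¹ = k at *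
  have hd := det2 k
  unfold tr2 at h4
  have hne : k 0 0 - k 1 1 ≠ 0 := by grind
  refine ⟨mk2 1 (k 0 1 / (k 0 0 - k 1 1)) 0 1 (by ring) * s, ?_⟩
  have : mk2 1 (k 0 1 / (k 0 0 - k 1 1)) 0 1 (by ring) * s * g *
    (mk2 1 (k 0 1 / (k 0 0 - k 1 1)) 0 1 (by ring) * s)⁻¹ =
     mk2 1 (k 0 1 / (k 0 0 - k 1 1)) 0 1 (by ring) * k * 
    (mk2 1 (k 0 1 / (k 0 0 - k 1 1)) 0 1 (by ring))⁻¹ := by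
    rw [← hg']; group
  rw [this]
  constructor
  · rw [mul10, mul10, mul11, inv00, inv10]
    simp [mk2, hs]
  · rw [mul01, mul00, mul01, inv01, inv11]
    simp [mk2, hs]
    field_simp
    ring
end basics

open Matrix

lemma ti_count {G : Type*} [Group G] [Finite G] (H N : Subgroup G) (A : Set G) (hNH : N ≤ H)
    (hN : ∀ n ∈ N, ∀ a ∈ A, n * a * n⁻¹ ∈ A)
    (hTI : ∀ x ∈ H, ∀ a ∈ A, x * a * x⁻¹ ∈ A → x ∈ N) :
    {g | ∃ x ∈ H, ∃ a ∈ A, g = x * a * x⁻¹}.ncard * Nat.card N = A.ncard * Nat.card H := by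
  classical
  set T := {g | ∃ x ∈ H, ∃ a ∈ A, g = x * a * x⁻¹} with hT
  have hch : ∀ g : T, ∃ x ∈ H, x⁻¹ * g * x ∈ A := by
    rintro ⟨g, x, hx, a, ha, rfl⟩
    exact ⟨x, hx, by simpa [mul_assoc] using ha⟩
  choose s hs hsA using hch
  rw [← Nat.card_coe_set_eq, ← Nat.card_coe_set_eq, ← Nat.card_prod, ← Nat.card_prod]
  refine Nat.card_congr (Equiv.ofBijective (fun p : T × N =>
    ((⟨(p.2 : G)⁻¹ * ((s p.1)⁻¹ * p.1 * s p.1) * p.2, by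
        have := hN _ (N.inv_mem p.2.2) _ (hsA p.1); simpa using this⟩ : A),
      (⟨s p.1 * p.2, H.mul_mem (hs _) (hNH p.2.2)⟩ : H))) ⟨?_, ?_⟩)
  · rintro ⟨g, n⟩ ⟨g', n'⟩ h
    simp only [Prod.mk.injEq, Subtype.mk.injEq] at h
    obtain ⟨h1, h2⟩ := h
    have e : ∀ (g : T) (n : N), (g : G) = (s g * n) * ((n : G)⁻¹ * ((s g)⁻¹ * g * s g) * n) *
      (s g * n)⁻¹ := by intro g n; group
    have : g = g' := by
      apply Subtype.ext
      rw [e g n, e g' n', h1, h2]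
    subst this
    have : n = n' := Subtype.ext (mul_left_cancel h2)
    rw [this]
  · rintro ⟨⟨a, ha⟩, ⟨x, hx⟩⟩
    let g : T := ⟨x * a * x⁻¹, x, hx, a, ha, rfl⟩
    have hn : (s g)⁻¹ * x ∈ N := by
      apply hTI _ (H.mul_mem (H.inv_mem (hs g)) hx) a ha
      have := hsA g
      convert this using 1
      simp only [g]; group
    refine ⟨(g, ⟨_, hn⟩), ?_⟩
    simp only [Prod.mk.injEq, Subtype.mk.injEq]
    constructor
    · simp only [g]; group
    · group

section sub
variable {F : Type*} [Field F] [Finite F]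

abbrev ZC (F : Type*) [Field F] : Subgroup (SLT F) := Subgroup.center (SLT F)

def CH (H : Subgroup (SLT F)) (g : SLT F) : Subgroup (SLT F) := H ⊓ Subgroup.centralizer {g}

lemma mem_CH {H : Subgroup (SLT F)} {g x : SLT F} : x ∈ CH H g ↔ x ∈ H ∧ Commute g x := by
  unfold CH
  rw [Subgroup.mem_inf, Subgroup.mem_centralizer_singleton_iff]
  exact Iff.rfl.and (by rw [Commute, SemiconjBy]; exact eq_comm)

def NH (H : Subgroup (SLT F)) (g : SLT F) (hg : g ∉ ZC F) : Subgroup (SLT F) where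
  carrier := {x | x ∈ H ∧ Commute (x * g * x⁻¹) g}
  one_mem' := ⟨H.one_mem, by simp⟩
  mul_mem' := by
    rintro x y ⟨hx, hx'⟩ ⟨hy, hy'⟩
    refine ⟨H.mul_mem hx hy, ?_⟩
    have h1 : Commute (x * (y * g * y⁻¹) * x⁻¹) (x * g * x⁻¹) := (commute_conj _ _ _).2 hy'
    have h2 := comm_trans2 (by rwa [center_conj]) h1.symm hx'
    convert h2 using 1; group
  inv_mem' := by
    rintro x ⟨hx, hx'⟩
    refine ⟨H.inv_mem hx, ?_⟩
    have := (commute_conj x⁻¹ _ _).2 hx'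
    have e : x⁻¹ * (x * g * x⁻¹) * x⁻¹⁻¹ = g := by group
    rw [e] at this
    exact this.symm

lemma mem_NH {H : Subgroup (SLT F)} {g x : SLT F} {hg : g ∉ ZC F} :
    x ∈ NH H g hg ↔ x ∈ H ∧ Commute (x * g * x⁻¹) g := Iff.rfl

def TH (H : Subgroup (SLT F)) (g : SLT F) : Set (SLT F) :=
  {k | ∃ x ∈ H, ∃ a ∈ ((CH H g : Set (SLT F)) \ (ZC F : Set (SLT F))), k = x * a * x⁻¹}

lemma TH_count (H : Subgroup (SLT F)) (g : SLT F) (hg : g ∉ ZC F) :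
    (TH H g).ncard * Nat.card (NH H g hg) =
      ((CH H g : Set (SLT F)) \ (ZC F : Set (SLT F))).ncard * Nat.card H := by
  apply ti_count
  · intro x hx; exact hx.1
  · rintro n ⟨hn, hn'⟩ a ⟨ha, haZ⟩
    rw [SetLike.mem_coe, mem_CH] at ha
    refine ⟨mem_CH.2 ⟨H.mul_mem (H.mul_mem hn ha.1) (H.inv_mem hn), ?_⟩, ?_⟩
    · have h1 := (commute_conj n _ _).2 ha.2
      exact comm_trans2 (by rwa [center_conj]) hn' h1
    · rw [SetLike.mem_coe, center_conj]; exact haZ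
  · rintro x hx a ⟨ha, haZ⟩ ⟨hb, hbZ⟩
    refine ⟨hx, ?_⟩
    have h1 := (commute_conj x _ _).2 (mem_CH.1 ha).2
    exact comm_trans2 hbZ h1.symm (mem_CH.1 hb).2.symm

lemma self_mem_TH {H : Subgroup (SLT F)} {g : SLT F} (hgH : g ∈ H) (hg : g ∉ ZC F) : g ∈ TH H g :=
  ⟨1, H.one_mem, g, ⟨mem_CH.2 ⟨hgH, Commute.refl g⟩, hg⟩, by simp⟩

lemma TH_sub {H : Subgroup (SLT F)} {g k : SLT F} (hk : k ∈ TH H g) : k ∈ H ∧ k ∉ ZC F := by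
  obtain ⟨x, hx, a, ⟨ha, haZ⟩, rfl⟩ := hk
  exact ⟨H.mul_mem (H.mul_mem hx (mem_CH.1 ha).1) (H.inv_mem hx), by rwa [center_conj]⟩

lemma TH_disj {H : Subgroup (SLT F)} {g g' : SLT F} (hg'H : g' ∈ H) (hg' : g' ∉ ZC F)
    (h : g' ∉ TH H g) : Disjoint (TH H g) (TH H g') := by
  rw [Set.disjoint_left]
  rintro k ⟨x, hx, a, ⟨ha, haZ⟩, rfl⟩ ⟨x', hx', a', ⟨ha', haZ'⟩, he⟩
  apply h
  have hw : x'⁻¹ * x ∈ H := H.mul_mem (H.inv_mem hx') hx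
  have e : a' = (x'⁻¹ * x) * a * (x'⁻¹ * x)⁻¹ := by
    have : a' = x'⁻¹ * (x' * a' * x'⁻¹) * x' := by group
    rw [this, ← he]; group
  set w := x'⁻¹ * x
  have h1 := (commute_conj w _ _).2 (mem_CH.1 ha).2
  rw [← e] at h1
  have h2 : Commute (w * g * w⁻¹) g' := comm_trans2 haZ' h1.symm (mem_CH.1 ha').2.symm
  refine ⟨w, hw, w⁻¹ * g' * w, ⟨mem_CH.2 ⟨H.mul_mem (H.mul_mem (H.inv_mem hw) hg'H) hw, ?_⟩, ?_⟩, ?_⟩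
  · rw [← commute_conj w]; convert h2 using 1; group
  · rw [SetLike.mem_coe, ← center_conj w]; convert hg' using 2; group
  · group

lemma CH_index {H : Subgroup (SLT F)} (hZ : ZC F ≤ H) {g : SLT F} (hgH : g ∈ H) :
    ∃ d, Nat.card (CH H g) = Nat.card (ZC F) * d ∧ g ^ d ∈ ZC F ∧ 0 < d ∧
      ((CH H g : Set (SLT F)) \ (ZC F : Set (SLT F))).ncard + Nat.card (ZC F) = 
        Nat.card (CH H g) := by
  have hle : ZC F ≤ CH H g := fun z hz => mem_CH.2 ⟨hZ hz, ((Subgroup.mem_center_iff.1 hz) g)⟩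
  have hgC : g ∈ CH H g := mem_CH.2 ⟨hgH, Commute.refl g⟩
  have h2 := Subgroup.pow_index_mem ((ZC F).subgroupOf (CH H g)) ⟨g, hgC⟩
  have h1 := Subgroup.card_mul_index ((ZC F).subgroupOf (CH H g))
  rw [Nat.card_congr (Subgroup.subgroupOfEquivOfLe hle).toEquiv] at h1
  refine ⟨_, h1.symm, ?_, ?_, ?_⟩
  · rw [Subgroup.mem_subgroupOf] at h2
    simpa using h2
  · exact Nat.pos_of_ne_zero Subgroup.index_ne_zero_of_finite
  · have := Set.ncard_sdiff_add_ncard_of_subset (s := (ZC F : Set (SLT F))) (t := (CH H g : Set (SLT F))) hle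
    rw [← Nat.card_coe_set_eq (CH H g : Set (SLT F)), ← Nat.card_coe_set_eq (ZC F : Set (SLT F))] at this
    exact this

lemma NH_card {H : Subgroup (SLT F)} {g : SLT F} (hg : g ∉ ZC F)
    (h4 : tr2 g ^ 2 ≠ 4) : ∃ e, Nat.card (NH H g hg) = e * Nat.card (CH H g) ∧
      (e = 1 ∨ (e = 2 ∧ ∃ w ∈ H, w * g * w⁻¹ = g⁻¹)) := by
  have hle : CH H g ≤ NH H g hg := by
    intro x hx
    obtain ⟨h1, h2⟩ := mem_CH.1 hx
    refine ⟨h1, ?_⟩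
    have : x * g * x⁻¹ = g := by rw [← h2.eq]; group
    rw [this]
  have hinv : ∀ b ∈ NH H g hg, b ∉ CH H g → b * g * b⁻¹ = g⁻¹ := by
    intro b hb hb'
    rcases conj_pm hg h4 hb.2.symm (tr2_conj b g) (by rwa [center_conj]) with h | h
    · exfalso; apply hb'; refine mem_CH.2 ⟨hb.1, ?_⟩
      have : b * g = g * b := by rw [mul_inv_eq_iff_eq_mul] at h; exact h
      exact this.symm
    · exact h
  by_cases h : NH H g hg ≤ CH H g
  · refine ⟨1, ?_, Or.inl rfl⟩
    rw [le_antisymm h hle, one_mul]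
  · obtain ⟨w, hw, hw'⟩ := SetLike.not_le_iff_exists.1 h
    refine ⟨2, ?_, Or.inr ⟨rfl, w, hw.1, hinv w hw hw'⟩⟩
    have hidx : (CH H g).relIndex (NH H g hg) = 2 := by
      rw [Subgroup.relIndex_eq_two_iff]
      refine ⟨w, hw, fun b hb => ?_⟩
      by_cases hbC : b ∈ CH H g
      · right
        refine ⟨hbC, fun hbw => hw' ?_⟩
        have := (CH H g).mul_mem ((CH H g).inv_mem hbC) hbw
        simpa using this
      · left
        refine ⟨mem_CH.2 ⟨H.mul_mem hb.1 hw.1, ?_⟩, hbC⟩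
        have e1 := hinv w hw hw'
        have e2 := hinv b hb hbC
        have : (b * w) * g * (b * w)⁻¹ = g := by
          have : (b * w) * g * (b * w)⁻¹ = b * (w * g * w⁻¹) * b⁻¹ := by group
          rw [this, e1]
          have : b * g⁻¹ * b⁻¹ = (b * g * b⁻¹)⁻¹ := by group
          rw [this, e2, inv_inv]
        rw [mul_inv_eq_iff_eq_mul] at this
        exact this.symm
    have := Subgroup.card_mul_index ((CH H g).subgroupOf (NH H g hg))
    rw [Nat.card_congr (Subgroup.subgroupOfEquivOfLe hle).toEquiv] at this
    rw [← this]
    change _ * (CH H g).relIndex (NH H g hg) = _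
    rw [hidx, mul_comm]

lemma ssT {H : Subgroup (SLT F)} (hZ : ZC F ≤ H) {g : SLT F} (hgH : g ∈ H) (hg : g ∉ ZC F)
    (h4 : tr2 g ^ 2 ≠ 4) : ∃ e d, Nat.card (CH H g) = Nat.card (ZC F) * d ∧ g ^ d ∈ ZC F ∧ 0 < d ∧
      (TH H g).ncard * (e * d) + Nat.card H = d * Nat.card H ∧
      (e = 1 ∨ (e = 2 ∧ ∃ w ∈ H, w * g * w⁻¹ = g⁻¹)) := by
  obtain ⟨d, h1, h2, h3, h5⟩ := CH_index hZ hgH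
  obtain ⟨e, h6, h7⟩ := NH_card (H := H) hg h4
  have h8 := TH_count H g hg
  refine ⟨e, d, h1, h2, h3, ?_, h7⟩
  have hz : 0 < Nat.card (ZC F) := Nat.card_pos
  apply Nat.eq_of_mul_eq_mul_left hz
  rw [h6, h1] at h8
  rw [h1] at h5
  zify at *
  linear_combination h8 + (Nat.card H : ℤ) * h5

lemma pow_not_center {g : SLT F} (h0 : tr2 g ≠ 0) (h1 : tr2 g ^ 2 ≠ 1) (h4 : tr2 g ^ 2 ≠ 4) :
    g ∉ ZC F ∧ ∀ d, 0 < d → g ^ d ∈ ZC F → 4 ≤ d := by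
  have hd := det2 g
  have key : g ∉ ZC F := by
    rw [center2]; unfold tr2 at *; grind
  refine ⟨key, fun d hd0 hdZ => ?_⟩
  by_contra hlt
  rw [center2] at key
  unfold tr2 at *
  have : d = 1 ∨ d = 2 ∨ d = 3 := by omega
  rcases this with rfl | rfl | rfl
  · rw [pow_one, center2] at hdZ; exact key hdZ
  · rw [pow_two, center2, mul01, mul10, mul00, mul11] at hdZ
    grind
  · rw [pow_succ, pow_two, center2] at hdZ
    simp only [mul01, mul10, mul00, mul11] at hdZ
    obtain ⟨f1, f2, f3⟩ := hdZ
    have e1 : g 0 1 * ((g 0 0 + g 1 1) ^ 2 - 1) = 0 := by clear h0 h1 h4 key; grind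
    have e2 : g 1 0 * ((g 0 0 + g 1 1) ^ 2 - 1) = 0 := by clear h0 h1 h4 key; grind
    have e3 : (g 0 0 - g 1 1) * ((g 0 0 + g 1 1) ^ 2 - 1) = 0 := by clear h0 h1 h4 key; grind
    have := sub_ne_zero.2 h1
    simp only [mul_eq_zero, this, or_false] at e1 e2 e3
    exact key ⟨e1, e2, by grind⟩
end sub

open Matrix

section ctx
variable {F : Type*} [Field F] [Finite F]

structure GoodTr (t : F) : Prop where
  h0 : t ≠ 0
  h1 : t ^ 2 ≠ 1
  h4 : t ^ 2 ≠ 4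

structure Ctx (H : Subgroup (SLT F)) (y1 y2 : SLT F) : Prop where
  hZ : ZC F ≤ H
  m1 : y1 ∈ H
  m2 : y2 ∈ H
  y01 : y1 0 1 = 0
  y10 : y1 1 0 = 0
  g1 : GoodTr (tr2 y1)
  g2 : GoodTr (tr2 y2)
  ns : ¬ Spl (tr2 y2)

lemma GoodTr.nc {y : SLT F} (h : GoodTr (tr2 y)) : y ∉ ZC F := (pow_not_center h.h0 h.h1 h.h4).1

variable {H : Subgroup (SLT F)} {y1 y2 : SLT F}

lemma tr4_iff (g : SLT F) (h : g 1 0 = 0) : tr2 g ^ 2 = 4 ↔ g 0 0 = g 1 1 := by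
  have := det2 g
  unfold tr2
  rw [h] at this
  have e : (g 0 0 + g 1 1) ^ 2 - 4 = (g 0 0 - g 1 1) ^ 2 := by
    linear_combination (-4) * (1 - g 0 0 * g 1 1) + 4 * (1 - this * 0) - 4 * g 0 0 * g 1 1 + 4 * this
  rw [← sub_eq_zero, e, sq_eq_zero_iff, sub_eq_zero]

lemma Ctx.spl1 (c : Ctx H y1 y2) : Spl (tr2 y1) := spl_of_upper c.y10

lemma Ctx.ydiff (c : Ctx H y1 y2) : y1 0 0 ≠ y1 1 1 := fun h => c.g1.h4 ((tr4_iff _ c.y10).2 h)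

lemma TH1_spl (c : Ctx H y1 y2) {g : SLT F} (hg : g ∈ TH H y1) : Spl (tr2 g) := by
  obtain ⟨x, hx, a, ⟨ha, haZ⟩, rfl⟩ := hg
  rw [tr2_conj]
  exact spl_comm c.g1.nc c.spl1 (mem_CH.1 ha).2

lemma TH2_nspl (c : Ctx H y1 y2) {g : SLT F} (hg : g ∈ TH H y2) : ¬ Spl (tr2 g) := by
  obtain ⟨x, hx, a, ⟨ha, haZ⟩, rfl⟩ := hg
  rw [tr2_conj]
  exact fun h => c.ns (spl_comm haZ h (mem_CH.1 ha).2.symm)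

lemma diag_of_CH (c : Ctx H y1 y2) {a : SLT F} (ha : a ∈ CH H y1) : a 0 1 = 0 ∧ a 1 0 = 0 := by
  have := (mem_CH.1 ha).2
  rw [comm2, c.y01, c.y10] at this
  have h := sub_ne_zero.2 c.ydiff
  simpa [h] using this.2

lemma CH_of_diag (c : Ctx H y1 y2) {a : SLT F} (ha : a ∈ H) (h1 : a 0 1 = 0) (h2 : a 1 0 = 0) :
    a ∈ CH H y1 := by
  refine mem_CH.2 ⟨ha, ?_⟩
  rw [comm2, c.y01, c.y10, h1, h2]; simp

lemma TH1_ss (c : Ctx H y1 y2) {g : SLT F} (hg : g ∈ TH H y1) : tr2 g ^ 2 ≠ 4 := by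
  obtain ⟨x, hx, a, ⟨ha, haZ⟩, rfl⟩ := hg
  rw [tr2_conj]
  obtain ⟨h1, h2⟩ := diag_of_CH c ha
  rw [Ne, tr4_iff _ h2]
  intro h3
  exact haZ ((center2 a).2 ⟨h1, h2, h3⟩)

lemma arithT {T e d h k : ℕ} (hT : T * (e * d) + h = d * h) (he : e ≤ 2) (hd : k ≤ d) (hk : 0 < k) :
    (k - 1) * h ≤ 2 * k * T := by
  obtain ⟨k, rfl⟩ : ∃ j, k = j + 1 := ⟨k - 1, by omega⟩
  obtain ⟨d, rfl⟩ : ∃ j, d = j + 1 := ⟨d - 1, by omega⟩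
  have h1 : T * (e * (d + 1)) = d * h := by linarith [add_mul d 1 h]
  have h2 : T * (e * (d + 1)) ≤ T * (2 * (d + 1)) := by gcongr
  have hkd : k ≤ d := by omega
  simp only [Nat.add_sub_cancel]
  have h3 : (d + 1) * (k * h) ≤ (d + 1) * (2 * (k + 1) * T) := by
    have : k * h ≤ d * h := Nat.mul_le_mul_right _ hkd
    nlinarith
  exact Nat.le_of_mul_le_mul_left h3 (Nat.succ_pos d)

lemma four_sets {S1 S2 S3 : Set (SLT F)} (hZ : ZC F ≤ H)
    (h1 : ∀ x ∈ S1, x ∈ H ∧ x ∉ ZC F) (h2 : ∀ x ∈ S2, x ∈ H ∧ x ∉ ZC F)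
    (h3 : ∀ x ∈ S3, x ∈ H ∧ x ∉ ZC F) (d12 : Disjoint S1 S2) (d13 : Disjoint S1 S3)
    (d23 : Disjoint S2 S3) :
    S1.ncard + S2.ncard + S3.ncard + Nat.card (ZC F) ≤ Nat.card H ∧
    ((∀ x ∈ H, x ∉ ZC F → x ∈ S1 ∨ x ∈ S2 ∨ x ∈ S3) →
      S1.ncard + S2.ncard + S3.ncard + Nat.card (ZC F) = Nat.card H) := by
  have e : (S1 ∪ S2 ∪ S3 ∪ (ZC F : Set (SLT F))).ncard =
      S1.ncard + S2.ncard + S3.ncard + Nat.card (ZC F) := by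
    rw [Set.ncard_union_eq, Set.ncard_union_eq, Set.ncard_union_eq d12]
    · rfl
    · exact Set.disjoint_union_left.2 ⟨d13, d23⟩
    · rw [Set.disjoint_left]
      rintro x ((hx | hx) | hx)
      exacts [(h1 x hx).2, (h2 x hx).2, (h3 x hx).2]
  have hs : (S1 ∪ S2 ∪ S3 ∪ (ZC F : Set (SLT F))) ⊆ H := by
    rintro x (((hx | hx) | hx) | hx)
    exacts [(h1 x hx).1, (h2 x hx).1, (h3 x hx).1, hZ hx]
  have hH : (H : Set (SLT F)).ncard = Nat.card H := rfl
  rw [← e, ← hH]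
  refine ⟨Set.ncard_le_ncard hs, fun hc => ?_⟩
  congr 1
  refine hs.antisymm fun x hx => ?_
  by_cases hxZ : x ∈ ZC F
  · exact Or.inr hxZ
  · rcases hc x hx hxZ with h | h | h
    exacts [Or.inl (Or.inl (Or.inl h)), Or.inl (Or.inl (Or.inr h)), Or.inl (Or.inr h)]

lemma Ctx.disj12 (c : Ctx H y1 y2) : Disjoint (TH H y1) (TH H y2) := by
  rw [Set.disjoint_left]
  exact fun x hx hx' => TH2_nspl c hx' (TH1_spl c hx)

lemma Ctx.eqs (c : Ctx H y1 y2) : ∃ d1 d2, 4 ≤ d1 ∧ 4 ≤ d2 ∧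
    Nat.card (CH H y1) = Nat.card (ZC F) * d1 ∧ y1 ^ d1 ∈ ZC F ∧ y2 ^ d2 ∈ ZC F ∧
    (TH H y1).ncard * (2 * d1) + Nat.card H = d1 * Nat.card H ∧
    (TH H y2).ncard * (2 * d2) + Nat.card H = d2 * Nat.card H ∧
    ∃ w ∈ H, w * y1 * w⁻¹ = y1⁻¹ := by
  obtain ⟨e1, d1, a1, b1, c1, f1, k1⟩ := ssT c.hZ c.m1 c.g1.nc c.g1.h4
  obtain ⟨e2, d2, a2, b2, c2, f2, k2⟩ := ssT c.hZ c.m2 c.g2.nc c.g2.h4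
  have l1 := (pow_not_center c.g1.h0 c.g1.h1 c.g1.h4).2 d1 c1 b1
  have l2 := (pow_not_center c.g2.h0 c.g2.h1 c.g2.h4).2 d2 c2 b2
  have hs := (four_sets (S3 := ∅) c.hZ (fun x hx => TH_sub hx) (fun x hx => TH_sub hx) (by simp)
    c.disj12 (by simp) (by simp)).1
  have hz : 0 < Nat.card (ZC F) := Nat.card_pos
  simp only [Set.ncard_empty] at hs
  have t1 := arithT f1 (by omega) l1 (by norm_num)
  have t2 := arithT f2 (by omega) l2 (by norm_num)
  norm_num at t1 t2
  have key : ∀ {T d : ℕ}, T * (1 * d) + Nat.card H = d * Nat.card H → 4 ≤ d →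
      3 * Nat.card H ≤ 4 * T := by
    intro T d hT hd
    have := arithT (T := T) (e := 2) (d := d) (h := 2 * Nat.card H) (k := 4) (by linarith) le_rfl hd (by norm_num)
    norm_num at this
    omega
  have h1 : e1 = 2 ∧ ∃ w ∈ H, w * y1 * w⁻¹ = y1⁻¹ := by
    rcases k1 with rfl | h
    · have := key f1 l1
      omega
    · exact h
  have h2 : e2 = 2 := by
    rcases k2 with rfl | h
    · have := key f2 l2
      omega
    · exact h.1
  obtain ⟨rfl, hw⟩ := h1
  subst h2
  exact ⟨d1, d2, l1, l2, a1, b1, b2, f1, f2, hw⟩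

lemma Ctx.ssum (c : Ctx H y1 y2) : 3 * Nat.card H ≤ 4 * ((TH H y1).ncard + (TH H y2).ncard) := by
  obtain ⟨d1, d2, l1, l2, a1, b1, b2, f1, f2, hw⟩ := c.eqs
  have t1 := arithT f1 (by omega) l1 (by norm_num)
  have t2 := arithT f2 (by omega) l2 (by norm_num)
  norm_num at t1 t2
  omega

lemma Ctx.cover_ss (c : Ctx H y1 y2) {g : SLT F} (hg : g ∈ H) (hgZ : g ∉ ZC F)
    (h4 : tr2 g ^ 2 ≠ 4) : g ∈ TH H y1 ∨ g ∈ TH H y2 := by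
  by_contra! hcon
  have hs := (four_sets c.hZ (fun x hx => TH_sub hx) (fun x hx => TH_sub hx)
    (fun x hx => TH_sub hx)
    c.disj12 (TH_disj hg hgZ hcon.1) (TH_disj hg hgZ hcon.2)).1
  have hz : 0 < Nat.card (ZC F) := Nat.card_pos
  obtain ⟨e, d, a1, b1, c1, f1, k1⟩ := ssT c.hZ hg hgZ h4
  have hd : 2 ≤ d := by
    by_contra!
    have : d = 1 := by omega
    subst this; simp at b1; exact hgZ b1
  have t := arithT f1 (by omega) hd (by norm_num)
  norm_num at t
  have := c.ssum
  omega

def US (H : Subgroup (SLT F)) : Set (SLT F) := {g | g ∈ H ∧ g 1 0 = 0 ∧ g 0 0 = g 1 1 ∧ g ∉ ZC F}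

def TU (H : Subgroup (SLT F)) : Set (SLT F) := {k | ∃ x ∈ H, ∃ a ∈ US H, k = x * a * x⁻¹}

lemma TU_sub {k : SLT F} (hk : k ∈ TU H) : k ∈ H ∧ k ∉ ZC F := by
  obtain ⟨x, hx, a, ⟨ha, h1, h2, haZ⟩, rfl⟩ := hk
  exact ⟨H.mul_mem (H.mul_mem hx ha) (H.inv_mem hx), by rwa [center_conj]⟩

lemma TU_tr {k : SLT F} (hk : k ∈ TU H) : tr2 k ^ 2 = 4 := by
  obtain ⟨x, hx, a, ⟨ha, h1, h2, haZ⟩, rfl⟩ := hk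
  rw [tr2_conj, tr4_iff _ h1]; exact h2

lemma Ctx.disj1U (c : Ctx H y1 y2) : Disjoint (TH H y1) (TU H) := by
  rw [Set.disjoint_left]
  exact fun x hx hx' => TH1_ss c hx (TU_tr hx')

lemma Ctx.disj2U (c : Ctx H y1 y2) : Disjoint (TH H y2) (TU H) := by
  rw [Set.disjoint_left]
  exact fun x hx hx' => TH2_nspl c hx (spl_of_four (TU_tr hx'))

lemma norm_unip {g b : SLT F} (hg : g ∉ ZC F) (h4 : tr2 g ^ 2 = 4)
    (hb : Commute (b * g * b⁻¹) g) (hb' : ¬ Commute g b) : b ∉ ZC F ∧ Spl (tr2 b) ∧ tr2 b ^ 2 ≠ 4 := by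
  obtain ⟨s, hs⟩ := upper_of_spl (spl_of_four h4)
  have hb1 := (commute_conj s _ _).2 hb
  have hb'1 := fun h => hb' ((commute_conj s _ _).1 h)
  have e : s * (b * g * b⁻¹) * s⁻¹ = (s * b * s⁻¹) * (s * g * s⁻¹) * (s * b * s⁻¹)⁻¹ := by group
  rw [e] at hb1
  rw [← center_conj s] at hg ⊢
  rw [← tr2_conj s] at h4 ⊢
  generalize s * g * s⁻¹ = g at *
  generalize s * b * s⁻¹ = b at *
  clear e
  rw [tr4_iff _ hs] at h4
  have hx : g 0 1 ≠ 0 := by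
    intro h; exact hg ((center2 g).2 ⟨h, hs, h4⟩)
  have hu := upper_comm hg hs hb1.symm
  rw [mul10, mul10, mul11, inv00, inv10, hs, h4] at hu
  have hc : b 1 0 = 0 := by
    have : (b 1 0) ^ 2 * g 0 1 = 0 := by linear_combination -hu
    simpa [hx] using this
  have hne : b 0 0 ≠ b 1 1 := by
    intro h
    apply hb'1
    rw [comm2, hs, h4, hc, h]; simp
  refine ⟨?_, spl_of_upper hc, ?_⟩
  · rw [center2]; tauto
  · rwa [Ne, tr4_iff _ hc]

lemma Ctx.cover (c : Ctx H y1 y2) {g : SLT F} (hg : g ∈ H) (hgZ : g ∉ ZC F) :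
    g ∈ TH H y1 ∨ g ∈ TH H y2 ∨ g ∈ TU H := by
  by_cases h4 : tr2 g ^ 2 = 4
  swap
  · rcases c.cover_ss hg hgZ h4 with h | h <;> tauto
  by_cases hNC : NH H g hgZ ≤ CH H g
  · by_contra! hcon
    have hs := (four_sets c.hZ (fun x hx => TH_sub hx) (fun x hx => TH_sub hx)
      (fun x hx => TH_sub hx)
      c.disj12 (TH_disj hg hgZ hcon.1) (TH_disj hg hgZ hcon.2.1)).1
    have hz : 0 < Nat.card (ZC F) := Nat.card_pos
    obtain ⟨d, h1, h2, h3, h5⟩ := CH_index c.hZ hg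
    have hd : 2 ≤ d := by
      by_contra!
      have : d = 1 := by omega
      subst this; simp at h2; exact hgZ h2
    have ht := TH_count H g hgZ
    have hle : Nat.card (NH H g hgZ) ≤ Nat.card (CH H g) := Subgroup.card_le_of_le hNC
    have := c.ssum
    have hC : 0 < Nat.card (CH H g) := Nat.card_pos
    have hA : Nat.card (CH H g) ≤ 2 * ((CH H g : Set (SLT F)) \ (ZC F : Set (SLT F))).ncard := by
      nlinarith
    have : Nat.card H ≤ 2 * (TH H g).ncard := by
      have h6 : Nat.card (CH H g) * Nat.card H ≤ Nat.card (CH H g) * (2 * (TH H g).ncard) := by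
        calc Nat.card (CH H g) * Nat.card H ≤ 2 * ((CH H g : Set (SLT F)) \ (ZC F : Set (SLT F))).ncard * Nat.card H := by gcongr
          _ = 2 * ((TH H g).ncard * Nat.card (NH H g hgZ)) := by rw [ht]; ring
          _ ≤ 2 * ((TH H g).ncard * Nat.card (CH H g)) := by gcongr
          _ = _ := by ring
      exact Nat.le_of_mul_le_mul_left h6 hC
    omega
  · obtain ⟨b, hb, hb'⟩ := SetLike.not_le_iff_exists.1 hNC
    obtain ⟨n1, n2, n3⟩ := norm_unip hgZ h4 hb.2 (fun h => hb' (mem_CH.2 ⟨hb.1, h⟩))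
    rcases c.cover_ss hb.1 n1 n3 with h | h
    swap
    · exact absurd n2 (TH2_nspl c h)
    right; right
    obtain ⟨k, hk, a, ⟨ha, haZ⟩, rfl⟩ := h
    obtain ⟨d1, d2, l1, l2, -, b1, b2, f1, f2, w, hwH, hw⟩ := c.eqs
    obtain ⟨ha1, ha2⟩ := diag_of_CH c ha
    have hgk : g = k * (k⁻¹ * g * k) * k⁻¹ := by group
    have hgkH : k⁻¹ * g * k ∈ H := H.mul_mem (H.mul_mem (H.inv_mem hk) hg) hk
    have hcm : Commute (a * (k⁻¹ * g * k) * a⁻¹) (k⁻¹ * g * k) := by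
      rw [← commute_conj k, ← hgk]
      convert hb.2 using 1; group
    rw [hgk, center_conj] at hgZ
    rw [hgk, tr2_conj] at h4
    rw [hgk]
    clear hb hb' n1 n2 n3 hgk hNC hg
    generalize k⁻¹ * g * k = m at *
    have haa : a 0 0 ≠ a 1 1 := fun h => haZ ((center2 a).2 ⟨ha1, ha2, h⟩)
    have hda := det2 a
    have hdm := det2 m
    have hmm : (m 1 0 = 0 ∨ m 0 1 = 0) ∧ m 0 0 = m 1 1 := by
      rw [comm2] at hcm
      simp only [mul01, mul10, mul00, mul11, inv00, inv01, inv10, inv11, ha1, ha2] at hcm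
      obtain ⟨q1, q2, q3⟩ := hcm
      unfold tr2 at h4
      rw [ha1] at hda
      generalize a 0 0 = p at *
      generalize a 1 1 = p' at *
      generalize m 0 0 = x at *
      generalize m 0 1 = y at *
      generalize m 1 0 = z at *
      generalize m 1 1 = v at *
      have hpp : p * p' = 1 := by linear_combination hda
      have hp : p ≠ 0 := left_ne_zero_of_mul_eq_one hpp
      have hp' : p' ≠ 0 := right_ne_zero_of_mul_eq_one hpp
      have hdisc : (x - v) ^ 2 + 4 * (y * z) = 0 := by linear_combination h4 - 4 * hdm
      have r1 : y * z * ((p - p') * (p + p')) = 0 := by linear_combination q1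
      have r2 : (x - v) * y * (p - p') = 0 := by
        have : (x - v) * y * (p - p') * p = 0 := by
          linear_combination -q2
        simpa [hp] using this
      by_cases hy : y = 0
      · subst hy
        refine ⟨Or.inr rfl, ?_⟩
        have : (x - v) ^ 2 = 0 := by linear_combination hdisc
        exact sub_eq_zero.1 (pow_eq_zero_iff (two_ne_zero) |>.1 this)
      · have hxv : x - v = 0 := by
          simpa [hy, sub_ne_zero.2 haa] using r2
        refine ⟨Or.inl ?_, sub_eq_zero.1 hxv⟩
        by_contra hz
        have e4 : (4 : F) = 0 := by
          rw [hxv] at hdisc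
          have : (4 : F) * (y * z) = 0 := by linear_combination hdisc
          simpa [hy, hz] using this
        have e2 : (2 : F) = 0 := by
          have : (2 : F) ^ 2 = 0 := by linear_combination e4
          exact pow_eq_zero_iff (two_ne_zero) |>.1 this
        have : (p + p') = 0 := by
          simpa [hy, hz, sub_ne_zero.2 haa] using r1
        apply haa
        linear_combination this - p' * e2
    obtain ⟨hm1 | hm1, hm2⟩ := hmm
    · exact ⟨k, hk, m, ⟨hgkH, hm1, hm2, hgZ⟩, rfl⟩
    · have hww : w * y1 = y1⁻¹ * w := by rw [← hw]; group
      have w00 : w 0 0 = 0 := by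
        have := mul00 w y1
        rw [hww, mul00, inv00, inv01, c.y01, c.y10] at this
        have : w 0 0 * (y1 0 0 - y1 1 1) = 0 := by linear_combination -this
        simpa [sub_ne_zero.2 c.ydiff] using this
      have w11 : w 1 1 = 0 := by
        have := mul11 w y1
        rw [hww, mul11, inv11, inv10, c.y01, c.y10] at this
        have : w 1 1 * (y1 0 0 - y1 1 1) = 0 := by linear_combination this
        simpa [sub_ne_zero.2 c.ydiff] using this
      refine ⟨k * w⁻¹, H.mul_mem hk (H.inv_mem hwH), w * m * w⁻¹, ⟨H.mul_mem (H.mul_mem hwH hgkH) (H.inv_mem hwH), ?_, ?_, ?_⟩, by group⟩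
      · simp only [mul01, mul10, mul00, mul11, inv00, inv01, inv10, inv11, w00, w11, hm1]; ring
      · simp only [mul01, mul10, mul00, mul11, inv00, inv01, inv10, inv11, w00, w11, hm1, hm2]; ring
      · rwa [center_conj]
end ctx

open Matrix

section ctx4
variable {F : Type*} [Field F] [Finite F]
variable {H : Subgroup (SLT F)} {y1 y2 : SLT F}

def um (x : F) : SLT F := mk2 1 x 0 1 (by simp)
lemma um00 (x : F) : (um x) 0 0 = 1 := rfl
lemma um01 (x : F) : (um x) 0 1 = x := rfl
lemma um10 (x : F) : (um x) 1 0 = 0 := rfl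
lemma um11 (x : F) : (um x) 1 1 = 1 := rfl

lemma um_add (x y : F) : um (x + y) = um x * um y := by
  apply ext2 <;> simp only [mul00, mul01, mul10, mul11, um00, um01, um10, um11] <;> ring

lemma um_neg (x : F) : um (-x) = (um x)⁻¹ := by
  apply ext2 <;> simp only [inv00, inv01, inv10, inv11, um00, um01, um10, um11] <;> ring

lemma um_zero : um (0 : F) = 1 := by
  apply ext2 <;> simp [um00, um01, um10, um11]

def QH (H : Subgroup (SLT F)) : AddSubgroup F where
  carrier := {x | um x ∈ H}
  zero_mem' := by simp [um_zero, H.one_mem]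
  add_mem' := by
    intro a b ha hb
    simp only [Set.mem_setOf_eq, um_add] at *
    exact H.mul_mem ha hb
  neg_mem' := by
    intro a ha
    simp only [Set.mem_setOf_eq, um_neg] at *
    exact H.inv_mem ha

lemma mem_QH {x : F} : x ∈ QH H ↔ um x ∈ H := Iff.rfl

def BH (H : Subgroup (SLT F)) : Subgroup (SLT F) where
  carrier := {x | x ∈ H ∧ x 1 0 = 0}
  one_mem' := ⟨H.one_mem, by simp⟩
  mul_mem' := by
    rintro a b ⟨ha, ha'⟩ ⟨hb, hb'⟩
    exact ⟨H.mul_mem ha hb, by rw [mul10, ha', hb']; ring⟩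
  inv_mem' := by
    rintro a ⟨ha, ha'⟩
    exact ⟨H.inv_mem ha, by rw [inv10, ha']; ring⟩

lemma mem_BH {x : SLT F} : x ∈ BH H ↔ x ∈ H ∧ x 1 0 = 0 := Iff.rfl

lemma diag_match (c : Ctx H y1 y2) {b : SLT F} (hb : b ∈ BH H) :
    ∃ a ∈ CH H y1, a 0 0 = b 0 0 := by
  obtain ⟨hbH, hb0⟩ := hb
  have hdb := det2 b
  rw [hb0] at hdb
  by_cases he : b 0 0 = b 1 1
  · refine ⟨mk2 (b 0 0) 0 0 (b 1 1) (by linear_combination hdb), ?_, rfl⟩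
    refine CH_of_diag c (c.hZ ?_) rfl rfl
    rw [center2]
    exact ⟨rfl, rfl, he⟩
  · have h4 : tr2 b ^ 2 ≠ 4 := by rwa [Ne, tr4_iff _ hb0]
    have hbZ : b ∉ ZC F := by rw [center2]; tauto
    rcases c.cover_ss hbH hbZ h4 with h | h
    swap
    · exact absurd (spl_of_upper hb0) (TH2_nspl c h)
    obtain ⟨x, hx, a, ⟨ha, haZ⟩, hxa⟩ := h
    obtain ⟨h1, h2⟩ := diag_of_CH c ha
    have ht : tr2 a = tr2 b := by rw [hxa, tr2_conj]
    have hda := det2 a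
    rw [h1] at hda
    unfold tr2 at ht
    have : (a 0 0 - b 0 0) * (a 0 0 - b 1 1) = 0 := by
      linear_combination a 0 0 * ht + hdb - hda
    rcases mul_eq_zero.1 this with h | h
    · exact ⟨a, ha, sub_eq_zero.1 h⟩
    · refine ⟨a⁻¹, (CH H y1).inv_mem ha, ?_⟩
      rw [inv00]
      linear_combination ht - h

lemma BH_card (c : Ctx H y1 y2) : Nat.card (BH H) = Nat.card (CH H y1) * Nat.card (QH H) := by
  rw [← Nat.card_prod]
  symm
  apply Nat.card_congr
  refine Equiv.ofBijective (fun p => ⟨p.1.1 * um p.2.1, ?_⟩) ⟨?_, ?_⟩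
  · have := diag_of_CH c p.1.2
    refine ⟨H.mul_mem (mem_CH.1 p.1.2).1 p.2.2, ?_⟩
    rw [mul10, um00, um10, this.2]; ring
  · rintro ⟨⟨a, ha⟩, ⟨x, hx⟩⟩ ⟨⟨b, hb⟩, ⟨y, hy⟩⟩ h
    replace h : a * um x = b * um y := congrArg Subtype.val h
    obtain ⟨a1, a2⟩ := diag_of_CH c ha
    obtain ⟨b1, b2⟩ := diag_of_CH c hb
    have e00 := mul00 a (um x)
    have e01 := mul01 a (um x)
    have e11 := mul11 a (um x)
    rw [h, mul00, um00, um10, um00, um10, mul_one, mul_zero, add_zero, mul_zero, add_zero, mul_one] at e00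
    rw [h, mul01, um01, um11, um01, um11, a1, b1, ← e00] at e01
    rw [h, mul11, um01, um11, um01, um11, a2, b2] at e11
    have hab : a = b := ext2 e00.symm (by rw [a1, b1]) (by rw [a2, b2]) (by linear_combination -e11)
    subst hab
    have hd := det2 a
    rw [a1] at hd
    have h0 : a 0 0 ≠ 0 := by intro h; rw [h] at hd; simp at hd
    have : a 0 0 * (x - y) = 0 := by linear_combination -e01
    have hxy : x = y := by simpa [h0, sub_eq_zero] using this
    subst hxy; rfl
  · rintro ⟨b, hb⟩
    obtain ⟨a, ha, hab⟩ := diag_match c hb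
    obtain ⟨a1, a2⟩ := diag_of_CH c ha
    have hdb := det2 b
    have hda := det2 a
    rw [hb.2] at hdb
    rw [a1] at hda
    have hdd : a 1 1 = b 1 1 := by
      have h0 : a 0 0 ≠ 0 := by intro h; rw [h] at hda; simp at hda
      have : a 0 0 * (a 1 1 - b 1 1) = 0 := by rw [hab] at hda ⊢; linear_combination hda - hdb
      simpa [h0, sub_eq_zero] using this
    have key : a⁻¹ * b = um (a 1 1 * b 0 1) := by
      apply ext2 <;> simp only [mul00, mul01, mul10, mul11, inv00, inv01, inv10, inv11, um00, um01, um10, um11, a1, a2, hb.2]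
      · rw [hdd]; linear_combination hdb
      · ring
      · ring
      · rw [hab]; linear_combination hdb
    refine ⟨⟨⟨a, ha⟩, ⟨a 1 1 * b 0 1, ?_⟩⟩, ?_⟩
    · rw [mem_QH, ← key]
      exact H.mul_mem (H.inv_mem (mem_CH.1 ha).1) hb.1
    · refine Subtype.ext ?_
      show a * um _ = b
      rw [← key]; group

lemma US_card (c : Ctx H y1 y2) : (US H).ncard + Nat.card (ZC F) = Nat.card (ZC F) * Nat.card (QH H) := by
  have h1 : ((US H) ∪ (ZC F : Set (SLT F))).ncard = (US H).ncard + Nat.card (ZC F) := by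
    rw [Set.ncard_union_eq]; rfl
    rw [Set.disjoint_left]
    rintro x ⟨_, _, _, h⟩; exact h
  rw [← h1, ← Nat.card_prod]
  symm
  apply Nat.card_congr
  refine Equiv.ofBijective (fun p => ⟨p.1.1 * um p.2.1, ?_⟩) ⟨?_, ?_⟩
  · have hz := p.1.2
    rw [center2] at hz
    by_cases hZ : p.1.1 * um p.2.1 ∈ ZC F
    · exact Or.inr hZ
    · left
      refine ⟨H.mul_mem (c.hZ p.1.2) p.2.2, ?_, ?_, hZ⟩
      · rw [mul10, um00, um10, hz.2.1]; ring
      · rw [mul00, mul11, um00, um10, um01, um11, hz.2.1, hz.2.2]; ring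
  · rintro ⟨⟨a, ha⟩, ⟨x, hx⟩⟩ ⟨⟨b, hb⟩, ⟨y, hy⟩⟩ h
    replace h : a * um x = b * um y := congrArg Subtype.val h
    have ha' := (center2 a).1 ha
    have hb' := (center2 b).1 hb
    obtain ⟨a1, a2, a3⟩ := ha'
    obtain ⟨b1, b2, b3⟩ := hb'
    have e00 := mul00 a (um x)
    have e01 := mul01 a (um x)
    rw [h, mul00, um00, um10, um00, um10, mul_one, mul_zero, add_zero, mul_zero, add_zero, mul_one] at e00
    rw [h, mul01, um01, um11, um01, um11, a1, b1, ← e00] at e01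
    have hab : a = b := ext2 e00.symm (by rw [a1, b1]) (by rw [a2, b2]) (by rw [← a3, ← b3, e00])
    subst hab
    have hd := det2 a
    rw [a1] at hd
    have h0 : a 0 0 ≠ 0 := by intro h; rw [h] at hd; simp at hd
    have : a 0 0 * (x - y) = 0 := by linear_combination -e01
    have hxy : x = y := by simpa [h0, sub_eq_zero] using this
    subst hxy; rfl
  · rintro ⟨b, hb⟩
    have hb' : b ∈ H ∧ b 1 0 = 0 ∧ b 0 0 = b 1 1 := by
      rcases hb with ⟨h1, h2, h3, _⟩ | h
      · exact ⟨h1, h2, h3⟩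
      · exact ⟨c.hZ h, ((center2 b).1 h).2⟩
    obtain ⟨hbH, hb0, hbe⟩ := hb'
    have hdb := det2 b
    rw [hb0] at hdb
    have hcz : mk2 (b 0 0) 0 0 (b 1 1) (by linear_combination hdb) ∈ ZC F := by
      rw [center2]; exact ⟨rfl, rfl, hbe⟩
    set a := mk2 (b 0 0) 0 0 (b 1 1) (by linear_combination hdb) with ha
    have a00 : a 0 0 = b 0 0 := rfl
    have a01 : a 0 1 = 0 := rfl
    have a10 : a 1 0 = 0 := rfl
    have a11 : a 1 1 = b 1 1 := rfl
    have key : a⁻¹ * b = um (b 1 1 * b 0 1) := by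
      apply ext2 <;> simp only [mul00, mul01, mul10, mul11, inv00, inv01, inv10, inv11, um00, um01, um10, um11, a00, a01, a10, a11, hb0]
      · linear_combination hdb
      · ring
      · ring
      · linear_combination hdb
    refine ⟨⟨⟨a, hcz⟩, ⟨b 1 1 * b 0 1, ?_⟩⟩, ?_⟩
    · rw [mem_QH, ← key]
      exact H.mul_mem (H.inv_mem (c.hZ hcz)) hbH
    · refine Subtype.ext ?_
      show a * um _ = b
      rw [← key]; group

lemma TU_count (H : Subgroup (SLT F)) : (TU H).ncard * Nat.card (BH H) = (US H).ncard * Nat.card H := by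
  apply ti_count
  · intro x hx; exact hx.1
  · rintro n ⟨hn, hn0⟩ a ⟨ha, ha0, hae, haZ⟩
    refine ⟨H.mul_mem (H.mul_mem hn ha) (H.inv_mem hn), ?_, ?_, by rwa [center_conj]⟩
    · simp only [mul00, mul01, mul10, mul11, inv00, inv01, inv10, inv11, hn0, ha0]; ring
    · simp only [mul00, mul01, mul10, mul11, inv00, inv01, inv10, inv11, hn0, ha0, hae]; ring
  · rintro x hx a ⟨ha, ha0, hae, haZ⟩ ⟨hb, hb0, hbe, hbZ⟩
    refine ⟨hx, ?_⟩
    have hx0 : a 0 1 ≠ 0 := by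
      intro h; exact haZ ((center2 a).2 ⟨h, ha0, hae⟩)
    simp only [mul00, mul01, mul10, mul11, inv00, inv01, inv10, inv11, ha0, hae] at hb0
    have : (x 1 0) ^ 2 * a 0 1 = 0 := by linear_combination -hb0
    simpa [hx0] using this

lemma d1_le (c : Ctx H y1 y2) (hq : 1 < Nat.card (QH H)) :
    Nat.card (CH H y1) ≤ Nat.card (ZC F) * (Nat.card (QH H) - 1) := by
  classical
  have : Nontrivial (QH H) := Finite.one_lt_card_iff_nontrivial.1 hq
  obtain ⟨⟨x0, hx0⟩, hx0'⟩ := exists_ne (0 : QH H)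
  have hne : x0 ≠ 0 := by simpa using hx0'
  have := Fintype.ofFinite F
  have := Fintype.ofFinite (SLT F)
  let s : Finset (SLT F) := (CH H y1 : Set (SLT F)).toFinset
  let t : Finset F := ((QH H : Set F) \ {0}).toFinset
  have hmap : ∀ a ∈ s, (a 0 0) ^ 2 * x0 ∈ t := by
    intro a ha
    simp only [s, Set.mem_toFinset, SetLike.mem_coe] at ha
    obtain ⟨a1, a2⟩ := diag_of_CH c ha
    have hd := det2 a
    rw [a1] at hd
    have h0 : a 0 0 ≠ 0 := by intro h; rw [h] at hd; simp at hd
    simp only [t, Set.mem_toFinset, Set.mem_diff, SetLike.mem_coe, Set.mem_singleton_iff]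
    refine ⟨?_, by simp [h0, hne]⟩
    rw [mem_QH]
    have : um ((a 0 0) ^ 2 * x0) = a * um x0 * a⁻¹ := by
      apply ext2 <;> simp only [mul00, mul01, mul10, mul11, inv00, inv01, inv10, inv11, um00, um01, um10, um11, a1, a2]
      · linear_combination -hd
      · ring
      · ring
      · linear_combination -hd
    rw [this]
    have := (mem_CH.1 ha).1
    exact H.mul_mem (H.mul_mem this hx0) (H.inv_mem this)
  have hcard := Finset.card_le_mul_card_image_of_maps_to hmap (Nat.card (ZC F)) (by
    intro b hb
    by_cases hex : ∃ a0 ∈ s, (a0 0 0) ^ 2 * x0 = b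
    swap
    · have : ({a ∈ s | (a 0 0) ^ 2 * x0 = b} : Finset _) = ∅ := by
        rw [Finset.filter_eq_empty_iff]; intro a ha h; exact hex ⟨a, ha, h⟩
      rw [this]; simp
    · obtain ⟨a0, ha0, h0⟩ := hex
      have e : Nat.card (ZC F) = ((ZC F : Set (SLT F)).toFinset).card := by
        rw [← Set.ncard_eq_toFinset_card']; rfl
      rw [e]
      apply Finset.card_le_card_of_injOn (fun a => a0⁻¹ * a)
      · intro a ha
        simp only [Finset.coe_filter, Set.mem_setOf_eq, s, Set.mem_toFinset, SetLike.mem_coe] at ha ha0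
        simp only [Set.coe_toFinset, SetLike.mem_coe]
        obtain ⟨a1, a2⟩ := diag_of_CH c ha.1
        obtain ⟨b1, b2⟩ := diag_of_CH c ha0
        have hd := det2 a
        rw [a1] at hd
        have hd0 := det2 a0
        rw [b1] at hd0
        have hsq : a 0 0 ^ 2 = a0 0 0 ^ 2 := by
          have := ha.2.trans h0.symm
          exact mul_right_cancel₀ hne this
        rw [center2]
        simp only [mul00, mul01, mul10, mul11, inv00, inv01, inv10, inv11, a1, a2, b1, b2]
        refine ⟨by ring, by ring, ?_⟩
        rcases sq_eq_sq_iff_eq_or_eq_neg.1 hsq with h | h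
        · have hne0 : a0 0 0 ≠ 0 := by intro h; rw [h] at hd0; simp at hd0
          rw [h] at hd ⊢
          linear_combination hd0 - hd
        · have hne0 : a0 0 0 ≠ 0 := by intro h; rw [h] at hd0; simp at hd0
          rw [h] at hd ⊢
          linear_combination -hd0 + hd
      · intro a _ b _ h; exact mul_left_cancel h)
  have es : s.card = Nat.card (CH H y1) := by
    rw [← Set.ncard_eq_toFinset_card']; rfl
  have et : t.card = Nat.card (QH H) - 1 := by
    rw [← Set.ncard_eq_toFinset_card', Set.ncard_diff_singleton_of_mem (by simp [AddSubgroup.zero_mem])]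
    rfl
  rw [← es, ← et]; exact hcard

lemma H_card_ge (c : Ctx H y1 y2) : Nat.card (BH H) * (Nat.card (QH H) + 1) ≤ Nat.card H := by
  have hy : y2 1 0 ≠ 0 := fun h => c.ns (spl_of_upper h)
  rw [mul_add, mul_one, ← Nat.card_prod, ← Nat.card_sum]
  apply Nat.card_le_card_of_injective (fun p : (BH H × QH H) ⊕ BH H =>
    (Sum.elim (fun p => ⟨um p.2.1 * y2 * p.1.1, H.mul_mem (H.mul_mem p.2.2 c.m2) p.1.2.1⟩)
      (fun b => ⟨b.1, b.2.1⟩) p : H))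
  have key : ∀ (b : BH H) (x : F), (um x * y2 * b.1) 1 0 = y2 1 0 * b.1 0 0 := by
    intro b x
    simp only [mul10, mul11, um10, um11, b.2.2]; ring
  have hb0 : ∀ b : BH H, b.1 0 0 ≠ 0 := by
    intro b h
    have := det2 b.1
    rw [h, b.2.2] at this; simp at this
  rintro (⟨b, x⟩ | b) (⟨b', x'⟩ | b') h
  · simp only [Sum.elim_inl, Subtype.mk.injEq] at h
    have hbb : b'.1 * b.1⁻¹ = (um x'.1 * y2)⁻¹ * (um x.1 * y2) := by
      rw [mul_inv_eq_iff_eq_mul, mul_assoc, h]; group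
    have h2 : um x.1 = um x'.1 := by
      have e : (b'.1 * b.1⁻¹) 1 0 = 0 := by
        rw [mul10, inv10, inv00, b.2.2, b'.2.2]; ring
      have e2 : (um x'.1 * y2)⁻¹ * (um x.1 * y2) = y2⁻¹ * um (-x'.1 + x.1) * y2 := by
        rw [um_add, um_neg]; group
      rw [hbb, e2] at e
      simp only [mul00, mul01, mul10, mul11, inv00, inv01, inv10, inv11, um00, um01, um10, um11] at e
      have : (y2 1 0) ^ 2 * (x.1 - x'.1) = 0 := by linear_combination -e
      have : x.1 = x'.1 := by simpa [hy, sub_eq_zero] using this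
      rw [this]
    have h3 : x = x' := by
      have := um01 x.1
      rw [h2, um01] at this
      exact Subtype.ext this.symm
    subst h3
    have h4 : b = b' := Subtype.ext (mul_left_cancel h)
    rw [h4]
  · simp only [Sum.elim_inl, Sum.elim_inr, Subtype.mk.injEq] at h
    have := key b x
    rw [h, b'.2.2] at this
    simp [hy, hb0] at this
  · simp only [Sum.elim_inl, Sum.elim_inr, Subtype.mk.injEq] at h
    have := key b' x'
    rw [← h, b.2.2] at this
    simp [hy, hb0] at this
  · simp only [Sum.elim_inr, Subtype.mk.injEq] at h
    rw [Subtype.ext h]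
end ctx4

open Matrix

lemma big_arith {h B U T1 T2 TU z d1 d2 q m : ℕ} (e1 : T1 * (2 * d1) + h = d1 * h)
    (e2 : T2 * (2 * d2) + h = d2 * h) (e3 : TU * B = U * h) (e4 : U + z = z * q)
    (e5 : B = z * d1 * q) (e6 : T1 + T2 + TU + z = h) (e7 : h = B * m) (e8 : q + 1 ≤ m)
    (l1 : 4 ≤ d1) (l2 : 4 ≤ d2) (hz : 0 < z) (hq : 0 < q) (e9 : 1 < q → d1 + 1 ≤ q) :
    (d1 + 1 = q ∧ d2 = q + 1) ∨ (2 * d1 + 1 = q ∧ 2 * d2 = q + 1) := by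
  have hB : 0 < B := by rw [e5]; positivity
  have hTU : TU = U * m := by
    apply Nat.eq_of_mul_eq_mul_right hB
    rw [e3, e7]; ring
  subst hTU
  have key : (q * m * ((d2 : ℤ) - d1)) = 2 * d2 * (m - 1) := by
    zify at *
    have hz' : (z : ℤ) ≠ 0 := by positivity
    have hd1 : (d1 : ℤ) ≠ 0 := by positivity
    have hU : (U : ℤ) = z * q - z := by linarith
    have f1 : (2 * T1 : ℤ) = (d1 - 1) * (z * q * m) := by
      apply mul_left_cancel₀ hd1
      have : (T1 * (2 * d1) : ℤ) = (d1 - 1) * h := by linarith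
      rw [e7, e5] at this; linear_combination this
    have f2 : (2 * T2 * d2 : ℤ) = (d2 - 1) * (z * d1 * q * m) := by
      rw [e7, e5] at e2; linear_combination e2
    apply mul_left_cancel₀ hz'
    rw [e7, e5, hU] at e6
    linear_combination (2 * d2 : ℤ) * e6 - d2 * f1 - f2
  rcases Nat.lt_or_ge 1 q with hq1 | hq1
  swap
  · exfalso
    have : q = 1 := by omega
    subst this
    zify at e8 l1 l2
    push_cast at key
    nlinarith
  have hdq := e9 hq1
  have hq5 : 5 ≤ q := by omega
  clear e1 e2 e3 e4 e5 e6 e7 e9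
  obtain ⟨w, hw⟩ : ∃ w : ℤ, w = 2 * d2 - q * ((d2 : ℤ) - d1) := ⟨_, rfl⟩
  have hmw : (m : ℤ) * w = 2 * d2 := by rw [hw]; linear_combination -key
  have k2 : (2 * q * d1 : ℤ) = w * ((q - 2) * m + 2) := by
    linear_combination (-2 : ℤ) * hw - (q - 2) * hmw
  have cm : (q : ℤ) + 1 ≤ m := by exact_mod_cast e8
  have cq : (5 : ℤ) ≤ q := by exact_mod_cast hq5
  have cd : (d1 : ℤ) + 1 ≤ q := by exact_mod_cast hdq
  have cd2 : (4 : ℤ) ≤ d2 := by exact_mod_cast l2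
  have hw0 : 0 < w := by
    by_contra! hcon
    nlinarith
  have hmq : (q : ℤ) * (q - 1) ≤ (q - 2) * m + 2 := by nlinarith
  have hw2 : w ≤ 2 := by
    by_contra! hcon
    have : 3 ≤ w := hcon
    have g1 : 3 * ((q : ℤ) * (q - 1)) ≤ w * ((q - 2) * m + 2) := by
      apply mul_le_mul this hmq (by nlinarith) (by omega)
    nlinarith
  have hm2 : w = 1 ∨ w = 2 := by omega
  rcases hm2 with rfl | rfl
  · right
    obtain ⟨k, hk⟩ : ∃ k : ℤ, k = m - 2 * d1 := ⟨_, rfl⟩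
    have hk1 : 2 * ((m : ℤ) - 1) = q * k := by rw [hk]; linear_combination k2
    have hmle : (m : ℤ) ≤ 2 * q + 2 := by
      by_contra! hcon
      have : (2 * q + 3 : ℤ) ≤ m := hcon
      nlinarith
    have kl : 2 ≤ k := by
      by_contra! hcon
      have : k ≤ 1 := by omega
      nlinarith
    have ku : k ≤ 4 := by
      by_contra! hcon
      have : 5 ≤ k := hcon
      nlinarith
    have : k = 2 ∨ k = 3 ∨ k = 4 := by omega
    rcases this with rfl | rfl | rfl <;> omega
  · left
    have : (m : ℤ) = q + 1 := by
      by_contra hne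
      have : (q : ℤ) + 2 ≤ m := by omega
      nlinarith
    have h1 : (d1 : ℤ) + 1 = q := by
      rw [this] at k2
      have hq0 : (q : ℤ) ≠ 0 := by omega
      apply mul_left_cancel₀ hq0
      linarith
    omega

section ctx5
variable {F : Type*} [Field F] [Finite F]
variable {H : Subgroup (SLT F)} {y1 y2 : SLT F}

lemma Ctx.main (c : Ctx H y1 y2) : ∃ d1 d2, Nat.card (BH H) = Nat.card (ZC F) * d1 * Nat.card (QH H) ∧
    1 < Nat.card (QH H) ∧ y1 ^ d1 ∈ ZC F ∧ y2 ^ d2 ∈ ZC F ∧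
    ((d1 + 1 = Nat.card (QH H) ∧ d2 = Nat.card (QH H) + 1) ∨
     (2 * d1 + 1 = Nat.card (QH H) ∧ 2 * d2 = Nat.card (QH H) + 1)) := by
  obtain ⟨d1, d2, l1, l2, a1, b1, b2, f1, f2, hw⟩ := c.eqs
  have hB := BH_card c
  rw [a1] at hB
  have h6 := (four_sets c.hZ (fun x hx => TH_sub hx) (fun x hx => TH_sub hx)
    (fun x hx => TU_sub hx) c.disj12 c.disj1U c.disj2U).2 (fun x hx hxZ => c.cover hx hxZ)
  have hdvd : Nat.card (BH H) ∣ Nat.card H := Subgroup.card_dvd_of_le (fun x hx => hx.1)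
  obtain ⟨m, hm⟩ := hdvd
  have hz : 0 < Nat.card (ZC F) := Nat.card_pos
  have hq : 0 < Nat.card (QH H) := Nat.card_pos
  have hBp : 0 < Nat.card (BH H) := Nat.card_pos
  have h8 := H_card_ge c
  rw [hm] at h8
  have := big_arith f1 f2 (TU_count H) (US_card c) hB h6 hm (Nat.le_of_mul_le_mul_left h8 hBp) l1 l2 hz hq (by
    intro h
    have := d1_le c h
    rw [a1] at this
    have := Nat.le_of_mul_le_mul_left this hz
    omega)
  exact ⟨d1, d2, hB, by omega, b1, b2, this⟩

def Gen (t : F) : Prop := ∀ m : ℕ, 1 < m → m ∣ Nat.card F → m < Nat.card F → (t ^ 2) ^ m ≠ t ^ 2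

lemma add_inv2 (g : SLT F) : (g : Matrix (Fin 2) (Fin 2) F) + (g⁻¹ : SLT F) = Matrix.scalar (Fin 2) (tr2 g) := by
  ext i j
  fin_cases i <;> fin_cases j <;> simp [tr2, inv00, inv01, inv10, inv11, Matrix.adjugate_fin_two, add_comm]

lemma tr2_pow (g : SLT F) {m : ℕ} (hm : m ∣ Nat.card F) : tr2 (g ^ m) = tr2 g ^ m := by
  obtain ⟨p, hp⟩ := CharP.exists F
  have := Fintype.ofFinite F
  obtain ⟨n, hpp, hn⟩ := FiniteField.card F p
  have : Fact p.Prime := ⟨hpp⟩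
  rw [Nat.card_eq_fintype_card, hn] at hm
  obtain ⟨j, hj, rfl⟩ := (Nat.dvd_prime_pow hpp).1 hm
  have h1 := congrArg (fun M => M ^ (p ^ j)) (add_inv2 g)
  have hcm : Commute (g : Matrix (Fin 2) (Fin 2) F) (g⁻¹ : SLT F) := by
    have : Commute g g⁻¹ := by simp
    exact congrArg Subtype.val (this : g * g⁻¹ = g⁻¹ * g)
  rw [add_pow_char_pow_of_commute p j hcm, ← map_pow] at h1
  have hc : ∀ (x : SLT F) (k : ℕ), ((x ^ k : SLT F) : Matrix (Fin 2) (Fin 2) F) =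
      (x : Matrix (Fin 2) (Fin 2) F) ^ k := fun x k => Matrix.SpecialLinearGroup.coe_pow x k
  rw [← hc, ← hc, inv_pow, add_inv2] at h1
  exact Matrix.scalar_inj.1 h1

lemma center_scal {z : SLT F} (hz : z ∈ ZC F) (g : SLT F) : tr2 (z * g) ^ 2 = tr2 g ^ 2 := by
  have hd := det2 z
  rw [center2] at hz
  obtain ⟨h1, h2, h3⟩ := hz
  unfold tr2
  rw [mul00, mul11, h1, h2, ← h3]
  rw [h1, ← h3] at hd
  linear_combination (g 0 0 + g 1 1) ^ 2 * hd

lemma SL_card_le : Nat.card (SLT F) ≤ (Nat.card F - 1) * Nat.card F * (Nat.card F + 1) := by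
  classical
  have : Fintype F := Fintype.ofFinite F
  have e : (Nat.card F - 1) * Nat.card F * (Nat.card F + 1) =
      Nat.card ((Fˣ × F × F) ⊕ (Fˣ × F)) := by
    rw [Nat.card_sum, Nat.card_prod, Nat.card_prod, Nat.card_prod, Nat.card_units]; ring
  rw [e]
  apply Nat.card_le_card_of_injective (fun g : SLT F =>
    if h : g 1 0 = 0 then (Sum.inr (Units.mk0 (g 0 0) (by
      intro h0; have := det2 g; rw [h, h0] at this; simp at this), g 0 1) : (Fˣ × F × F) ⊕ (Fˣ × F))
    else Sum.inl (Units.mk0 (g 1 0) h, g 0 0, g 1 1))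
  intro g g' h
  have hd := det2 g
  have hd' := det2 g'
  simp only at h
  split_ifs at h with h1 h2 h2
  · simp only [Sum.inr.injEq, Prod.mk.injEq, Units.ext_iff, Units.val_mk0] at h
    obtain ⟨a1, a2⟩ := h
    have h0 : g 0 0 ≠ 0 := by intro h; rw [h, h1] at hd; simp at hd
    refine ext2 a1 a2 (by rw [h1, h2]) ?_
    apply mul_left_cancel₀ h0
    rw [← a1, ← a2, h2] at hd'
    rw [h1] at hd
    linear_combination hd - hd'
  · simp only [Sum.inl.injEq, Prod.mk.injEq, Units.ext_iff, Units.val_mk0] at h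
    obtain ⟨a1, a2, a3⟩ := h
    refine ext2 a2 ?_ a1 a3
    apply mul_right_cancel₀ h1
    rw [← a1, ← a2, ← a3] at hd'
    linear_combination hd' - hd

lemma Ctx.top (c : Ctx H y1 y2) (hg : Gen (tr2 y1) ∨ Gen (tr2 y2)) : H = ⊤ := by
  obtain ⟨d1, d2, hB, hq1, b1, b2, hd⟩ := c.main
  have hdv : Nat.card (QH H) ∣ Nat.card F := AddSubgroup.card_addSubgroup_dvd_card _
  have hz : 0 < Nat.card (ZC F) := Nat.card_pos
  have hqF : Nat.card (QH H) = Nat.card F := by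
    by_contra hne
    have hlt : Nat.card (QH H) < Nat.card F := lt_of_le_of_ne (Nat.le_of_dvd Nat.card_pos hdv) hne
    have c1 : ∃ z ∈ ZC F, y1 ^ (Nat.card (QH H)) = z * y1 := by
      rcases hd with ⟨h, -⟩ | ⟨h, -⟩
      · exact ⟨_, b1, by rw [← h, pow_succ]⟩
      · exact ⟨_, Subgroup.pow_mem _ b1 2, by rw [← h, pow_succ, mul_comm, pow_mul]⟩
    have c2 : ∃ z ∈ ZC F, y2 ^ (Nat.card (QH H)) = z * y2⁻¹ := by
      rcases hd with ⟨-, h⟩ | ⟨-, h⟩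
      · exact ⟨_, b2, by rw [h, pow_succ]; group⟩
      · exact ⟨_, Subgroup.pow_mem _ b2 2, by rw [← pow_mul, mul_comm, h, pow_succ]; group⟩
    rcases hg with hg | hg
    · obtain ⟨z, hz, e⟩ := c1
      apply hg _ hq1 hdv hlt
      rw [← pow_mul, mul_comm, pow_mul, ← tr2_pow _ hdv, e, center_scal hz]
    · obtain ⟨z, hz, e⟩ := c2
      apply hg _ hq1 hdv hlt
      rw [← pow_mul, mul_comm, pow_mul, ← tr2_pow _ hdv, e, center_scal hz, tr2_inv]
  apply Subgroup.eq_top_of_le_card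
  refine SL_card_le.trans (le_trans ?_ (H_card_ge c))
  rw [hB, hqF]
  gcongr
  rw [hqF] at hd
  rcases hd with ⟨h, -⟩ | ⟨h, -⟩
  · rw [← h]; simp; exact Nat.le_mul_of_pos_left _ hz
  · have hz2 : 1 < Nat.card (ZC F) := by
      rw [Finite.one_lt_card_iff_nontrivial]
      refine ⟨1, ⟨mk2 (-1) 0 0 (-1) (by ring), ?_⟩, ?_⟩
      · rw [center2]; exact ⟨rfl, rfl, rfl⟩
      · intro heq
        have := congrArg (fun z : ZC F => z.1 0 0) heq
        have h11 : (1 : F) = -1 := by simpa [mk2] using this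
        have h2 : addOrderOf (1 : F) = 2 := by
          apply addOrderOf_eq_prime
          · rw [two_nsmul]; nth_rewrite 1 [h11]; simp
          · exact one_ne_zero
        have := addOrderOf_dvd_natCard (1 : F)
        rw [h2] at this
        omega
    rw [← h]; simp
    exact Nat.mul_le_mul_right _ hz2

theorem top_of_good {H : Subgroup (SLT F)} (hZ : ZC F ≤ H) {y1 y2 : SLT F} (m1 : y1 ∈ H) (m2 : y2 ∈ H)
    (g1 : GoodTr (tr2 y1)) (g2 : GoodTr (tr2 y2)) (s1 : Spl (tr2 y1)) (s2 : ¬ Spl (tr2 y2))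
    (hg : Gen (tr2 y1) ∨ Gen (tr2 y2)) : H = ⊤ := by
  obtain ⟨s, h1, h2⟩ := diag_of_spl s1 g1.h4
  have c : Ctx (H.map (MulAut.conj s).toMonoidHom) (s * y1 * s⁻¹) (s * y2 * s⁻¹) := by
    refine ⟨?_, ⟨y1, m1, rfl⟩, ⟨y2, m2, rfl⟩, h2, h1, ?_, ?_, ?_⟩
    · intro z hz
      refine ⟨z, hZ hz, ?_⟩
      have := (Subgroup.mem_center_iff.1 hz) s
      show s * z * s⁻¹ = z
      rw [this]; group
    all_goals rwa [tr2_conj]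
  have := c.top (by rwa [tr2_conj, tr2_conj])
  rw [eq_top_iff]
  intro x _
  have hx : s * x * s⁻¹ ∈ H.map (MulAut.conj s).toMonoidHom := by rw [this]; trivial
  obtain ⟨x', hx', e⟩ := hx
  have e : s * x' * s⁻¹ = s * x * s⁻¹ := e
  have : x' = x := by simpa using e
  rwa [← this]
end ctx5

open Matrix

section cnt
variable {F : Type*} [Field F] [Finite F]

lemma fib_card (T : Set F) : T.ncard * (Nat.card F * (Nat.card F - 1)) ≤ {g : SLT F | tr2 g ∈ T}.ncard := by
  have := Fintype.ofFinite F
  have e : T.ncard * (Nat.card F * (Nat.card F - 1)) = Nat.card (T × F × Fˣ) := by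
    rw [Nat.card_prod, Nat.card_prod, Nat.card_units]; rfl
  have e2 : {g : SLT F | tr2 g ∈ T}.ncard = Nat.card {g : SLT F // tr2 g ∈ T} := rfl
  rw [e, e2]
  apply Nat.card_le_card_of_injective (fun p : T × F × Fˣ =>
    (⟨mk2 p.2.1 p.2.2 ((p.2.1 * (p.1.1 - p.2.1) - 1) / p.2.2) (p.1.1 - p.2.1) (by
      field_simp; ring), by
      show p.2.1 + (p.1.1 - p.2.1) ∈ T
      rw [add_sub_cancel]; exact p.1.2⟩ : {g : SLT F // tr2 g ∈ T}))
  rintro ⟨⟨t, ht⟩, a, b⟩ ⟨⟨t', ht'⟩, a', b'⟩ h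
  have h := congrArg Subtype.val h
  have h1 : a = a' := congrArg (fun g : SLT F => g 0 0) h
  have h2 : (b : F) = b' := congrArg (fun g : SLT F => g 0 1) h
  have h3 : t - a = t' - a' := congrArg (fun g : SLT F => g 1 1) h
  subst h1
  have h3 : t = t' := by simpa using h3
  subst h3
  rw [Units.ext h2]

lemma spl_iff {t : F} : Spl t ↔ ∃ a : Fˣ, (a : F) + (a⁻¹ : Fˣ) = t := by
  constructor
  · rintro ⟨a, ha⟩
    have h0 : a ≠ 0 := by rintro rfl; simp at ha
    refine ⟨Units.mk0 a h0, ?_⟩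
    simp only [Units.val_mk0, Units.val_inv_eq_inv_val]
    field_simp
    linear_combination ha
  · rintro ⟨a, rfl⟩
    refine ⟨a, ?_⟩
    simp only [Units.val_inv_eq_inv_val]
    field_simp
    ring

lemma spl_lower : Nat.card F ≤ 2 * {t : F | Spl t}.ncard + 1 := by
  classical
  have := Fintype.ofFinite F
  have h := Finset.card_le_mul_card_image_of_maps_to (s := (Finset.univ : Finset Fˣ))
    (t := {t : F | Spl t}.toFinset) (f := fun a : Fˣ => (a : F) + ((a⁻¹ : Fˣ) : F))
    (by intro a _; simp only [Set.mem_toFinset]; exact spl_iff.2 ⟨a, rfl⟩) 2 (by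
      intro t _
      by_cases hex : ∃ a : Fˣ, (a : F) + (a⁻¹ : Fˣ) = t
      · obtain ⟨a, ha⟩ := hex
        refine (Finset.card_le_card (t := {a, a⁻¹}) ?_).trans Finset.card_le_two
        intro b hb
        simp only [Finset.mem_filter, Finset.mem_univ, true_and] at hb
        simp only [Finset.mem_insert, Finset.mem_singleton]
        rw [← ha] at hb
        simp only [Units.val_inv_eq_inv_val] at hb
        have : ((b : F) - a) * (b - (a : F)⁻¹) = 0 := by
          field_simp at hb ⊢
          linear_combination hb
        rcases mul_eq_zero.1 this with h | h
        · left; exact Units.ext (sub_eq_zero.1 h)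
        · right; apply Units.ext; rw [Units.val_inv_eq_inv_val]; exact sub_eq_zero.1 h
      · rw [Finset.filter_false_of_mem]
        · simp
        · intro b _ h; exact hex ⟨b, h⟩)
  rw [← Set.ncard_eq_toFinset_card', Finset.card_univ, ← Nat.card_eq_fintype_card, Nat.card_units] at h
  omega

lemma spl_upper : 2 * {t : F | Spl t ∧ t ^ 2 ≠ 4}.ncard + 1 ≤ Nat.card F := by
  have := Fintype.ofFinite F
  have e : 2 * {t : F | Spl t ∧ t ^ 2 ≠ 4}.ncard = Nat.card (Bool × {t : F // Spl t ∧ t ^ 2 ≠ 4}) := by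
    rw [Nat.card_prod]; simp; rfl
  have hch : ∀ t : {t : F // Spl t ∧ t ^ 2 ≠ 4}, ∃ a : Fˣ, (a : F) + (a⁻¹ : Fˣ) = t := fun t => spl_iff.1 t.2.1
  choose f hf using hch
  have h : Nat.card (Bool × {t : F // Spl t ∧ t ^ 2 ≠ 4}) ≤ Nat.card Fˣ := by
    apply Nat.card_le_card_of_injective (fun p => if p.1 then f p.2 else (f p.2)⁻¹)
    have hT : ∀ p : (Bool × {t : F // Spl t ∧ t ^ 2 ≠ 4}), p.2.1 =
      ((if p.1 then f p.2 else (f p.2)⁻¹ : Fˣ) : F) + ((if p.1 then f p.2 else (f p.2)⁻¹)⁻¹ : Fˣ) := by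
      rintro ⟨b, t⟩
      cases b
      · simp only [Bool.false_eq_true, if_false, inv_inv]; rw [add_comm, hf]
      · simp only [if_true]; rw [hf]
    have hne : ∀ t, f t ≠ (f t)⁻¹ := by
      intro t h
      apply t.2.2
      rw [← hf t, ← h]
      have : f t * f t = 1 := by nth_rewrite 2 [h]; simp
      have : (f t : F) * f t = 1 := by rw [← Units.val_mul, this, Units.val_one]
      linear_combination 4 * this
    rintro ⟨b, t⟩ ⟨b', t'⟩ h
    have htt : t = t' := by
      apply Subtype.ext
      have h1 := hT ⟨b, t⟩
      have h2 := hT ⟨b', t'⟩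
      simp only at h h1 h2
      rw [h1, h2, h]
    subst htt
    have := hne t
    simp only at h
    cases b <;> cases b'
    · rfl
    · simp only [Bool.false_eq_true, if_false, if_true] at h
      exact absurd h.symm this
    · simp only [Bool.false_eq_true, if_false, if_true] at h
      exact absurd h this
    · rfl
  rw [← e, Nat.card_units] at h
  have := Nat.card_pos (α := F)
  omega

lemma sq_card (c : F) : {t : F | t ^ 2 = c ^ 2}.ncard ≤ 2 := by
  have : {t : F | t ^ 2 = c ^ 2} ⊆ {c, -c} := by
    intro t ht
    simpa using sq_eq_sq_iff_eq_or_eq_neg.1 ht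
  exact (Set.ncard_le_ncard this).trans (by
    have := Set.ncard_insert_le c {-c}
    rw [Set.ncard_singleton] at this; exact this)

lemma good_compl (A : Set F) : A.ncard ≤ (A ∩ {t | GoodTr t}).ncard + 5 := by
  have h : A ⊆ (A ∩ {t | GoodTr t}) ∪ ({0} ∪ ({t : F | t ^ 2 = 1 ^ 2} ∪ {t : F | t ^ 2 = 2 ^ 2})) := by
    intro t ht
    by_cases hg : GoodTr t
    · exact Or.inl ⟨ht, hg⟩
    · right
      by_contra hc
      simp only [Set.mem_union, Set.mem_singleton_iff, Set.mem_setOf_eq, not_or] at hc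
      refine hg ⟨hc.1, by simpa using hc.2.1, fun h => hc.2.2 (by rw [h]; norm_num)⟩
  have h1 := Set.ncard_le_ncard h
  have h2 := Set.ncard_union_le (A ∩ {t | GoodTr t}) ({0} ∪ ({t : F | t ^ 2 = 1 ^ 2} ∪ {t : F | t ^ 2 = 2 ^ 2}))
  have h3 := Set.ncard_union_le {0} ({t : F | t ^ 2 = 1 ^ 2} ∪ {t : F | t ^ 2 = 2 ^ 2})
  have h4 := Set.ncard_union_le {t : F | t ^ 2 = 1 ^ 2} {t : F | t ^ 2 = 2 ^ 2}
  have h5 := sq_card (1 : F)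
  have h6 := sq_card (2 : F)
  simp only [Set.ncard_singleton] at h3
  omega

lemma good_spl : Nat.card F ≤ 2 * ({t : F | Spl t} ∩ {t | GoodTr t}).ncard + 11 := by
  have := good_compl {t : F | Spl t}
  have := spl_lower (F := F)
  omega

lemma good_nspl : Nat.card F ≤ 2 * ({t : F | ¬ Spl t} ∩ {t | GoodTr t}).ncard + 13 := by
  have h1 := good_compl {t : F | ¬ Spl t}
  have h2 := spl_upper (F := F)
  have h3 : {t : F | Spl t}.ncard ≤ {t : F | Spl t ∧ t ^ 2 ≠ 4}.ncard + 2 := by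
    have : {t : F | Spl t} ⊆ {t : F | Spl t ∧ t ^ 2 ≠ 4} ∪ {t : F | t ^ 2 = 2 ^ 2} := by
      intro t ht
      by_cases h : t ^ 2 = 4
      · right; show t ^ 2 = 2 ^ 2; rw [h]; norm_num
      · left; exact ⟨ht, h⟩
    have h4 := Set.ncard_le_ncard this
    have h5 := Set.ncard_union_le {t : F | Spl t ∧ t ^ 2 ≠ 4} {t : F | t ^ 2 = 2 ^ 2}
    have := sq_card (2 : F)
    omega
  have h6 : {t : F | Spl t}.ncard + {t : F | ¬ Spl t}.ncard = Nat.card F := Set.ncard_add_ncard_compl {t : F | Spl t}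
  omega

lemma root_card (m : ℕ) (hm : 1 < m) : {t : F | (t ^ 2) ^ m = t ^ 2}.ncard ≤ 2 * m := by
  classical
  have := Fintype.ofFinite F
  open Polynomial in
  set P : F[X] := X ^ (2 * m) - X ^ 2 with hP
  have hdeg : P.natDegree = 2 * m := by
    rw [hP]
    apply Polynomial.natDegree_sub_eq_left_of_natDegree_lt _ |>.trans
    · simp
    · simp; omega
  have hP0 : P ≠ 0 := by
    intro h; rw [h] at hdeg; simp at hdeg; omega
  have hsub : {t : F | (t ^ 2) ^ m = t ^ 2} ⊆ (P.roots.toFinset : Set F) := by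
    intro t ht
    simp only [Finset.mem_coe, Multiset.mem_toFinset]
    rw [Polynomial.mem_roots hP0, Polynomial.IsRoot, hP]
    simp only [Polynomial.eval_sub, Polynomial.eval_pow, Polynomial.eval_X]
    rw [pow_mul, sub_eq_zero]; exact ht
  calc _ ≤ (P.roots.toFinset : Set F).ncard := Set.ncard_le_ncard hsub
    _ = P.roots.toFinset.card := Set.ncard_coe_finset _
    _ ≤ P.roots.card := Multiset.toFinset_card_le _
    _ ≤ P.natDegree := Polynomial.card_roots' _
    _ = _ := hdeg

lemma geo (p k : ℕ) (hp : 2 ≤ p) : ∑ d ∈ Finset.Icc 1 k, 2 * p ^ d ≤ 4 * p ^ k := by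
  induction k with
  | zero => simp
  | succ k ih =>
    rw [Finset.sum_Icc_succ_top (by omega), pow_succ]
    nlinarith [pow_pos (by omega : 0 < p) k]

lemma gen_compl : ∃ s : ℕ, s * s ≤ Nat.card F ∧ {t : F | ¬ Gen t}.ncard ≤ 4 * s := by
  classical
  obtain ⟨p, hp⟩ := CharP.exists F
  have := Fintype.ofFinite F
  obtain ⟨n, hpp, hn⟩ := FiniteField.card F p
  have : Fact p.Prime := ⟨hpp⟩
  refine ⟨p ^ ((n : ℕ) / 2), ?_, ?_⟩
  · rw [Nat.card_eq_fintype_card, hn, ← pow_add]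
    exact Nat.pow_le_pow_right hpp.pos (by omega)
  refine le_trans ?_ (geo p _ hpp.two_le)
  have hsub : {t : F | ¬ Gen t} ⊆ ⋃ d ∈ Finset.Icc 1 ((n : ℕ) / 2), {t : F | (t ^ 2) ^ (p ^ d) = t ^ 2} := by
    intro t ht
    simp only [Gen, Set.mem_setOf_eq] at ht
    push Not at ht
    obtain ⟨m, hm1, hm2, hm3, hm4⟩ := ht
    rw [Nat.card_eq_fintype_card, hn] at hm2 hm3
    obtain ⟨j, hj, rfl⟩ := (Nat.dvd_prime_pow hpp).1 hm2
    have hjn : j < n := (Nat.pow_lt_pow_iff_right hpp.one_lt).1 hm3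
    have hj0 : 0 < j := by
      rcases Nat.eq_zero_or_pos j with rfl | h
      · simp at hm1
      · exact h
    have it : ∀ k, Function.IsPeriodicPt (frobenius F p) k (t ^ 2) ↔ (t ^ 2) ^ (p ^ k) = t ^ 2 := by
      intro k
      rw [Function.IsPeriodicPt, Function.IsFixedPt, iterate_frobenius]
    have g1 := (it j).2 hm4
    have g2 := (it n).2 (by rw [← hn]; exact FiniteField.pow_card _)
    have g3 := (it _).1 (g1.gcd g2)
    simp only [Set.mem_iUnion, Finset.mem_Icc]
    refine ⟨Nat.gcd j n, ⟨Nat.gcd_pos_of_pos_left _ hj0, ?_⟩, g3⟩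
    obtain ⟨k, hk⟩ := Nat.gcd_dvd_right j n
    have hle : Nat.gcd j n ≤ j := Nat.gcd_le_left _ hj0
    have hk2 : 2 ≤ k := by
      by_contra! hcon
      interval_cases k <;> simp at hk <;> omega
    rw [Nat.le_div_iff_mul_le (by norm_num)]
    calc Nat.gcd j n * 2 ≤ Nat.gcd j n * k := Nat.mul_le_mul_left _ hk2
      _ = n := hk.symm
  refine (Set.ncard_le_ncard hsub).trans ((Finset.set_ncard_biUnion_le _ _).trans ?_)
  apply Finset.sum_le_sum
  intro d hd
  apply root_card
  exact Nat.one_lt_pow (by simp at hd; omega) hpp.one_lt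

lemma good_gen : ∃ s : ℕ, s * s ≤ Nat.card F ∧
    Nat.card F ≤ ({t : F | Gen t} ∩ {t | GoodTr t}).ncard + 5 + 4 * s := by
  obtain ⟨s, h1, h2⟩ := gen_compl (F := F)
  refine ⟨s, h1, ?_⟩
  have h3 := good_compl {t : F | Gen t}
  have h6 : {t : F | Gen t}.ncard + {t : F | ¬ Gen t}.ncard = Nat.card F := Set.ncard_add_ncard_compl {t : F | Gen t}
  omega
end cnt

section fin
variable {F : Type*} [Field F] [Finite F]

lemma invGen_of {g k : SLT F} (g1 : GoodTr (tr2 g)) (g2 : GoodTr (tr2 k)) (hg : Gen (tr2 g))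
    (hs : Spl (tr2 g) ↔ ¬ Spl (tr2 k)) : InvGen (g : PSL2 F) (k : PSL2 F) := by
  intro a b
  induction a using QuotientGroup.induction_on with | _ a => ?_
  induction b using QuotientGroup.induction_on with | _ b => ?_
  set K := Subgroup.closure {(a : PSL2 F) * g * (a : PSL2 F)⁻¹, (b : PSL2 F) * k * (b : PSL2 F)⁻¹} with hK
  have h1 : a * g * a⁻¹ ∈ K.comap (QuotientGroup.mk' (ZC F)) :=
    Subgroup.subset_closure (Or.inl rfl)
  have h2 : b * k * b⁻¹ ∈ K.comap (QuotientGroup.mk' (ZC F)) :=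
    Subgroup.subset_closure (Or.inr rfl)
  have hZ : ZC F ≤ K.comap (QuotientGroup.mk' (ZC F)) := by
    intro z hz
    rw [Subgroup.mem_comap]
    have : QuotientGroup.mk' (ZC F) z = 1 := (QuotientGroup.eq_one_iff z).2 hz
    rw [this]; exact K.one_mem
  have htop : K.comap (QuotientGroup.mk' (ZC F)) = ⊤ := by
    by_cases hsp : Spl (tr2 g)
    · exact top_of_good hZ h1 h2 (by rwa [tr2_conj]) (by rwa [tr2_conj]) (by rwa [tr2_conj])
        (by rw [tr2_conj]; exact hs.1 hsp) (by rw [tr2_conj, tr2_conj]; exact Or.inl hg)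
    · exact top_of_good hZ h2 h1 (by rwa [tr2_conj]) (by rwa [tr2_conj]) (by rw [tr2_conj]; tauto)
        (by rwa [tr2_conj]) (by rw [tr2_conj, tr2_conj]; exact Or.inr hg)
  rw [eq_top_iff]
  intro x _
  induction x using QuotientGroup.induction_on with | _ x => ?_
  have : x ∈ K.comap (QuotientGroup.mk' (ZC F)) := by rw [htop]; trivial
  exact this

lemma psl_card (A : Set (PSL2 F)) (T : Set F) (h : ∀ g : SLT F, tr2 g ∈ T → (g : PSL2 F) ∈ A) :
    (T.ncard : ℝ) * Nat.card (PSL2 F) ≤ (Nat.card F + 1) * Nat.card A := by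
  have h1 := fib_card T
  have h2 : {g : SLT F | tr2 g ∈ T}.ncard ≤ Nat.card (ZC F) * Nat.card A := by
    rw [← Nat.card_prod, ← Nat.card_congr (QuotientGroup.preimageMkEquivSubgroupProdSet (ZC F) A)]
    exact Set.ncard_le_ncard (t := QuotientGroup.mk ⁻¹' A) (fun g hg => h g hg)
  have h3 := SL_card_le (F := F)
  rw [Subgroup.card_eq_card_quotient_mul_card_subgroup (ZC F)] at h3
  have hz : 0 < Nat.card (ZC F) := Nat.card_pos
  have hq : 1 < Nat.card F := Finite.one_lt_card
  have h4 := h1.trans h2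
  obtain ⟨r, hr⟩ : ∃ r, r = Nat.card F * (Nat.card F - 1) := ⟨_, rfl⟩
  have hr0 : 0 < r := by rw [hr]; exact Nat.mul_pos (by omega) (by omega)
  rw [← hr] at h4
  have h5 : Nat.card (PSL2 F) * Nat.card (ZC F) ≤ r * (Nat.card F + 1) := by
    refine h3.trans (le_of_eq ?_)
    rw [hr]; ring
  have h6 : (T.ncard * Nat.card (PSL2 F)) ≤ (Nat.card F + 1) * Nat.card A := by
    apply Nat.le_of_mul_le_mul_left _ (Nat.mul_pos hz hr0)
    calc Nat.card (ZC F) * r * (T.ncard * Nat.card (PSL2 F))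
        = (T.ncard * r) * (Nat.card (PSL2 F) * Nat.card (ZC F)) := by ring
      _ ≤ (Nat.card (ZC F) * Nat.card A) * (r * (Nat.card F + 1)) := Nat.mul_le_mul h4 h5
      _ = _ := by ring
  exact_mod_cast h6

lemma half_count (A : Set (PSL2 F)) (T : Set F) (h : ∀ g : SLT F, tr2 g ∈ T → (g : PSL2 F) ∈ A)
    (hT : Nat.card F ≤ 2 * T.ncard + 13) :
    (Nat.card A : ℝ) ≥ (1 / 2 - 10 / (Nat.card F : ℝ)) * Nat.card (PSL2 F) := by
  have h1 := psl_card A T h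
  have hq : (0 : ℝ) < Nat.card F := by exact_mod_cast Nat.card_pos
  have hP : (0 : ℝ) ≤ Nat.card (PSL2 F) := by positivity
  have hT' : (Nat.card F : ℝ) ≤ 2 * T.ncard + 13 := by exact_mod_cast hT
  generalize (Nat.card F : ℝ) = q at *
  generalize (Nat.card (PSL2 F) : ℝ) = P at *
  generalize (Nat.card A : ℝ) = a at *
  generalize (T.ncard : ℝ) = t at *
  have h2 : (q + 1) * (1 / 2 - 10 / q) ≤ t := by
    have : (q + 1) * (1 / 2 - 10 / q) = q / 2 + 1 / 2 - 10 - 10 / q := by field_simp; ring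
    rw [this]
    have : 0 ≤ 10 / q := by positivity
    linarith
  have h3 : (q + 1) * ((1 / 2 - 10 / q) * P) ≤ (q + 1) * a := by
    rw [← mul_assoc]
    exact (mul_le_mul_of_nonneg_right h2 hP).trans h1
  exact le_of_mul_le_mul_left h3 (by linarith)

lemma main_count (A : Set (PSL2 F)) (T : Set F) (h : ∀ g : SLT F, tr2 g ∈ T → (g : PSL2 F) ∈ A)
    (s : ℕ) (hs : s * s ≤ Nat.card F) (hT : Nat.card F ≤ T.ncard + 5 + 4 * s) :
    (Nat.card A : ℝ) ≥ (1 - 10 * (Nat.card F : ℝ) ^ (-(1 : ℝ) / 2)) * Nat.card (PSL2 F) := by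
  have h1 := psl_card A T h
  have hq : (1 : ℝ) < Nat.card F := by exact_mod_cast Finite.one_lt_card (α := F)
  have hP : (0 : ℝ) ≤ Nat.card (PSL2 F) := by positivity
  have hT' : (Nat.card F : ℝ) ≤ T.ncard + 5 + 4 * s := by exact_mod_cast hT
  have hs' : (s : ℝ) * s ≤ Nat.card F := by exact_mod_cast hs
  have hs0 : (0 : ℝ) ≤ s := by positivity
  generalize (Nat.card F : ℝ) = q at *
  generalize (Nat.card (PSL2 F) : ℝ) = P at *
  generalize (Nat.card A : ℝ) = a at *
  generalize (T.ncard : ℝ) = t at *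
  generalize (s : ℝ) = s at *
  have hr : q ^ (-(1 : ℝ) / 2) = 1 / √q := by
    rw [Real.sqrt_eq_rpow, one_div, ← Real.rpow_neg (by linarith)]; norm_num
  rw [hr]
  have hsr : s ≤ √q := Real.le_sqrt_of_sq_le (by rw [sq]; exact hs')
  have hr1 : 1 ≤ √q := by rw [Real.one_le_sqrt]; exact hq.le
  have hrr : √q * √q = q := Real.mul_self_sqrt (by linarith)
  generalize √q = r at *
  have h2 : (q + 1) * (1 - 10 * (1 / r)) ≤ t := by
    have : (q + 1) * (1 - 10 * (1 / r)) = q + 1 - 10 * r - 10 * (1 / r) := by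
      rw [← hrr]; field_simp; ring
    rw [this]
    have : 0 ≤ 1 / r := by positivity
    linarith
  have h3 : (q + 1) * ((1 - 10 * (1 / r)) * P) ≤ (q + 1) * a := by
    rw [← mul_assoc]
    exact (mul_le_mul_of_nonneg_right h2 hP).trans h1
  exact le_of_mul_le_mul_left h3 (by linarith)
end fin

theorem stmt_3 :
    ∃ C : ℝ, 0 < C ∧
      ∀ (F : Type) [Field F] [Fintype F],
        (Nat.card {y : PSL2 F //
            (Nat.card {z : PSL2 F // InvGen y z} : ℝ) ≥
              (1 / 2 - C / Fintype.card F) * Nat.card (PSL2 F)} : ℝ) ≥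
          (1 - C * (Fintype.card F : ℝ) ^ (-(1 : ℝ) / 2)) * Nat.card (PSL2 F) := by
  refine ⟨10, by norm_num, ?_⟩
  intro F _ _
  rw [← Nat.card_eq_fintype_card]
  obtain ⟨s, hs, hT⟩ := good_gen (F := F)
  refine main_count {y : PSL2 F | (Nat.card {z : PSL2 F // InvGen y z} : ℝ) ≥
              (1 / 2 - 10 / Nat.card F) * Nat.card (PSL2 F)} _ ?_ s hs hT
  rintro g ⟨hg1, hg2⟩
  show (Nat.card {z : PSL2 F // InvGen (g : PSL2 F) z} : ℝ) ≥
              (1 / 2 - 10 / Nat.card F) * Nat.card (PSL2 F)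
  by_cases hsp : Spl (tr2 g)
  · refine half_count {z : PSL2 F | InvGen (g : PSL2 F) z} _ ?_ good_nspl
    rintro k ⟨hk1, hk2⟩
    exact invGen_of hg2 hk2 hg1 (iff_of_true hsp hk1)
  · refine half_count {z : PSL2 F | InvGen (g : PSL2 F) z} ({t : F | Spl t} ∩ {t | GoodTr t}) ?_
      ((good_spl (F := F)).trans (by omega))
    rintro k ⟨hk1, hk2⟩
    exact invGen_of hg2 hk2 hg1 (iff_of_false hsp (fun h => h hk1))
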